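/- arXiv:2001.05986 — 9 statements merged into one kernel-verified Lean document; each statement's English description precedes it below -/
import Mathlib

section
/- Let λ ∈ ℂ with λ ∉ ℤ, and let M_λ be the ℂ-vector space with basis (e_n)_{n∈ℤ} equipped with the ℂ-linear operators Q : e_n ↦ e_{n+1} and P : e_n ↦ (n+λ)·e_{n−1}. If U ⊆ M_λ is a ℂ-subspace with P(U) ⊆ U and Q(U) ⊆ U, then U = 0 or U = M_λ. (That is, the Weyl module ℂ[x,x⁻¹]x^λ with p = d/dx and q = x is simple for λ ∉ ℤ.) -/
/-!
The operator `QP` is diagonal on the basis `e_n`, with eigenvalues `n + λ` that are pairwise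
distinct. A suitable Lagrange basis polynomial in `QP` therefore extracts any single component of
a vector, so a nonzero invariant subspace contains some `e_m`. Since no `n + λ` vanishes, `P` and
`Q` carry `e_m` to nonzero multiples of all other `e_n`.
-/

open Module Polynomial Submodule

theorem aeval_mem_invtSubmodule {R M : Type*} [CommSemiring R] [AddCommMonoid M] [Module R M]
    {f : End R M} {U : Submodule R M} (hU : U ∈ f.invtSubmodule) (p : R[X]) :
    U ∈ (aeval f p).invtSubmodule := by
  intro v hv
  rw [mem_comap, aeval_eq_sum_range, LinearMap.sum_apply]
  exact sum_mem fun i _ ↦ U.smul_mem _ (End.pow_apply_mem_of_forall_mem i hU v hv)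

section Field

variable {K V ι : Type*} [Field K] [AddCommGroup V] [Module K V] {U : Submodule K V}

section Eigenvectors

variable {f : End K V} {μ : ι → K} {x : ι → V}

theorem aeval_lagrangeBasis_sum_eigenvectors [DecidableEq ι] {s : Finset ι}
    (hx : ∀ i ∈ s, f (x i) = μ i • x i) (hμ : Set.InjOn μ s) {i : ι} (hi : i ∈ s) :
    aeval f (Lagrange.basis s μ i) (∑ j ∈ s, x j) = x i := by
  have aeval_eigenvector : ∀ j ∈ s, aeval f (Lagrange.basis s μ i) (x j) =
      (Lagrange.basis s μ i).eval (μ j) • x j :=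
    fun j hj ↦ End.aeval_apply_of_mem_apply_eq_smul (hx j hj)
  rw [map_sum, Finset.sum_eq_single_of_mem i hi, aeval_eigenvector i hi,
    Lagrange.eval_basis_self hμ hi, one_smul]
  intro j hj hji
  rw [aeval_eigenvector j hj, Lagrange.eval_basis_of_ne hji.symm hj, zero_smul]

theorem eigenvector_mem_of_sum_mem {s : Finset ι} (hU : U ∈ f.invtSubmodule)
    (hx : ∀ i ∈ s, f (x i) = μ i • x i) (hμ : Set.InjOn μ s) (hsum : ∑ i ∈ s, x i ∈ U)
    {i : ι} (hi : i ∈ s) : x i ∈ U := by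
  classical
  rw [← aeval_lagrangeBasis_sum_eigenvectors hx hμ hi]
  exact aeval_mem_invtSubmodule hU _ hsum

theorem exists_eigenvector_mem_of_ne_bot (hU : U ∈ f.invtSubmodule)
    (hx : ∀ i, f (x i) = μ i • x i) (hμ : Function.Injective μ)
    (hspan : span K (Set.range x) = ⊤) (hne : U ≠ ⊥) : ∃ i, x i ∈ U := by
  obtain ⟨v, hvU, hv⟩ := U.exists_mem_ne_zero_of_ne_bot hne
  obtain ⟨c, rfl⟩ : ∃ c : ι →₀ K, c.sum (fun i a ↦ a • x i) = v :=
    Finsupp.mem_span_range_iff_exists_finsupp.mp (hspan ▸ mem_top)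
  obtain ⟨i, hi⟩ : c.support.Nonempty := by
    rw [Finsupp.support_nonempty_iff]
    rintro rfl
    exact hv Finsupp.sum_zero_index
  have hcx : ∀ j ∈ c.support, f (c j • x j) = μ j • c j • x j := fun j _ ↦ by
    rw [map_smul, hx, smul_comm]
  exact ⟨i, (U.smul_mem_iff (Finsupp.mem_support_iff.mp hi)).mp
    (eigenvector_mem_of_sum_mem hU hcx hμ.injOn hvU hi)⟩

end Eigenvectors

section WeightedShifts

variable {P Q : End K V} {e : ℤ → V} {a b : ℤ → K}

theorem forall_mem_of_weightedShifts (hP : ∀ n, P (e n) = a n • e (n - 1))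
    (hQ : ∀ n, Q (e n) = b n • e (n + 1)) (ha : ∀ n, a n ≠ 0) (hb : ∀ n, b n ≠ 0)
    (hPU : U ∈ P.invtSubmodule) (hQU : U ∈ Q.invtSubmodule) {m : ℤ} (hm : e m ∈ U) (n : ℤ) :
    e n ∈ U := by
  induction n using Int.inductionOn' (b := m) with
  | zero => exact hm
  | succ k _ hk => exact (U.smul_mem_iff (hb k)).mp (hQ k ▸ hQU hk)
  | pred k _ hk => exact (U.smul_mem_iff (ha k)).mp (hP k ▸ hPU hk)

theorem eq_bot_or_eq_top_of_weightedShifts (hspan : span K (Set.range e) = ⊤)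
    (hP : ∀ n, P (e n) = a n • e (n - 1)) (hQ : ∀ n, Q (e n) = b n • e (n + 1))
    (ha : ∀ n, a n ≠ 0) (hb : ∀ n, b n ≠ 0)
    (hab : Function.Injective fun n ↦ a n * b (n - 1))
    (hPU : U ∈ P.invtSubmodule) (hQU : U ∈ Q.invtSubmodule) : U = ⊥ ∨ U = ⊤ := by
  refine or_iff_not_imp_left.mpr fun hne ↦ ?_
  have hQPU : U ∈ (Q * P).invtSubmodule := fun _ hv ↦ hQU (hPU hv)
  have hQP : ∀ n, (Q * P) (e n) = (a n * b (n - 1)) • e n := fun n ↦ by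
    rw [End.mul_apply, hP, map_smul, hQ, sub_add_cancel, smul_smul]
  obtain ⟨m, hm⟩ := exists_eigenvector_mem_of_ne_bot hQPU hQP hab hspan hne
  rw [eq_top_iff, ← hspan, span_le, Set.range_subset_iff]
  exact forall_mem_of_weightedShifts hP hQ ha hb hPU hQU hm

end WeightedShifts

theorem weyl_module_typical_simple_general [CharZero K] {lam : K} (hlam : ∀ k : ℤ, lam ≠ k)
    (e : Basis ℤ K V) {P Q : End K V} (hP : ∀ n : ℤ, P (e n) = (n + lam) • e (n - 1))
    (hQ : ∀ n : ℤ, Q (e n) = e (n + 1)) (hPU : U ∈ P.invtSubmodule) (hQU : U ∈ Q.invtSubmodule) :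
    U = ⊥ ∨ U = ⊤ := by
  have weight_ne_zero (n : ℤ) : (n : K) + lam ≠ 0 := fun h ↦
    hlam (-n) (by rw [Int.cast_neg, eq_neg_of_add_eq_zero_right h])
  have weight_injective : Function.Injective fun n : ℤ ↦ ((n : K) + lam) * 1 := fun m n h ↦ by
    simpa using h
  exact eq_bot_or_eq_top_of_weightedShifts (b := fun _ ↦ 1) e.span_eq hP (by simpa using hQ)
    weight_ne_zero (fun _ ↦ one_ne_zero) weight_injective hPU hQU

end Field

/-- For `λ ∈ ℂ ∖ ℤ`, the Weyl module `M_λ = ℂ[x,x⁻¹]x^λ` (with basis `(e_n)_{n ∈ ℤ}` realized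
as finitely supported functions `ℤ → ℂ`, `Q : e_n ↦ e_{n+1}` and `P : e_n ↦ (n+λ)·e_{n-1}`) is
simple: any subspace invariant under `P` and `Q` is `0` or everything. -/
theorem weyl_module_typical_simple
    (lam : ℂ) (hlam : ∀ k : ℤ, lam ≠ (k : ℂ))
    (P Q : (ℤ →₀ ℂ) →ₗ[ℂ] (ℤ →₀ ℂ))
    (hP : ∀ n : ℤ, P (Finsupp.single n 1) = ((n : ℂ) + lam) • Finsupp.single (n - 1) 1)
    (hQ : ∀ n : ℤ, Q (Finsupp.single n 1) = Finsupp.single (n + 1) 1)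
    (U : Submodule ℂ (ℤ →₀ ℂ))
    (hPU : ∀ v ∈ U, P v ∈ U) (hQU : ∀ v ∈ U, Q v ∈ U) :
    U = ⊥ ∨ U = ⊤ := by
  exact weyl_module_typical_simple_general hlam Finsupp.basisSingleOne (by simpa using hP)
    (by simpa using hQ) hPU hQU
end

section
/- Let λ, μ ∈ ℂ with λ, μ ∉ ℤ, and let M_λ, M_μ be the corresponding modules with operators (P,Q) as below. There exists a ℂ-linear isomorphism φ : M_λ → M_μ satisfying φ∘P = P∘φ and φ∘Q = Q∘φ if and only if λ − μ ∈ ℤ. -/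
/-!
The Euler operator `Q ∘ P` acts on `M_a` diagonally, `e_n ↦ (n + a) • e_n`, so its eigenvalues all
lie in the coset `a + ℤ`. A nonzero map `M_a → M_b` commuting with `P` and `Q` carries some `e_n`
to an eigenvector of the Euler operator of `M_b` with eigenvalue `n + a`, which forces
`a - b ∈ ℤ`. Conversely, if `a = b + k` then `e_n ↦ e_{n+k}` is an isomorphism.
-/

/-- `P` and `Q` are the operators through which the Weyl algebra acts on the module
`M_a = R[x, x⁻¹]x^a`, where `e_n = Finsupp.single n 1` stands for `x^(n + a)`: `P` is `d/dx` and `Q`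
is multiplication by `x`. A linear map is determined by its values on the `e_n`, so for each `a`
there is exactly one such pair. -/
structure IsWeylPair {R : Type*} [CommRing R] (a : R) (P Q : (ℤ →₀ R) →ₗ[R] (ℤ →₀ R)) : Prop where
  map_P_single (n : ℤ) : P (Finsupp.single n 1) = ((n : R) + a) • Finsupp.single (n - 1) 1
  map_Q_single (n : ℤ) : Q (Finsupp.single n 1) = Finsupp.single (n + 1) 1

namespace IsWeylPair

variable {R : Type*} [CommRing R] {a b : R} {P Q P' Q' : (ℤ →₀ R) →ₗ[R] (ℤ →₀ R)}

theorem euler_single (h : IsWeylPair a P Q) (n : ℤ) :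
    Q (P (Finsupp.single n 1)) = ((n : R) + a) • Finsupp.single n 1 := by
  rw [h.map_P_single, map_smul, h.map_Q_single, sub_add_cancel]

theorem euler_apply (h : IsWeylPair a P Q) (v : ℤ →₀ R) (n : ℤ) :
    Q (P v) n = ((n : R) + a) * v n := by
  have coord_comp_euler :
      Finsupp.lapply n ∘ₗ Q ∘ₗ P = ((n : R) + a) • Finsupp.lapply (R := R) n := by
    refine Finsupp.basisSingleOne.ext fun m => ?_
    obtain rfl | hmn := eq_or_ne m n
    · simp [h.euler_single]
    · simp [h.euler_single, hmn]
  exact LinearMap.congr_fun coord_comp_euler v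

theorem exists_eq_intCast_add_of_euler_eq_smul [NoZeroDivisors R] (h : IsWeylPair a P Q) {c : R}
    {v : ℤ →₀ R} (hv : v ≠ 0) (hc : Q (P v) = c • v) : ∃ n : ℤ, c = n + a := by
  obtain ⟨n, hn⟩ := Finsupp.ne_iff.mp hv
  refine ⟨n, mul_right_cancel₀ hn ?_⟩
  rw [← h.euler_apply, hc, Finsupp.smul_apply, smul_eq_mul]

theorem exists_sub_eq_intCast_of_intertwining [NoZeroDivisors R] (h : IsWeylPair a P Q)
    (h' : IsWeylPair b P' Q') {φ : (ℤ →₀ R) →ₗ[R] (ℤ →₀ R)} (hφ : φ ≠ 0)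
    (hP : ∀ v, φ (P v) = P' (φ v)) (hQ : ∀ v, φ (Q v) = Q' (φ v)) : ∃ k : ℤ, a - b = k := by
  obtain ⟨n, hn⟩ : ∃ n : ℤ, φ (Finsupp.single n 1) ≠ 0 := by
    contrapose! hφ
    exact Finsupp.basisSingleOne.ext fun n => by simpa using hφ n
  have image_eigen :
      Q' (P' (φ (Finsupp.single n 1))) = ((n : R) + a) • φ (Finsupp.single n 1) := by
    rw [← hP, ← hQ, h.euler_single, map_smul]
  obtain ⟨m, hm⟩ := h'.exists_eq_intCast_add_of_euler_eq_smul hn image_eigen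
  refine ⟨m - n, ?_⟩
  push_cast
  linear_combination hm

variable (R) in
/-- The translation `e_n ↦ e_{n+k}` of the basis, which identifies `M_{b+k}` with `M_b`. -/
noncomputable def shift (k : ℤ) : (ℤ →₀ R) ≃ₗ[R] (ℤ →₀ R) :=
  Finsupp.domLCongr (Equiv.addRight k)

theorem shift_single (k n : ℤ) (r : R) :
    shift R k (Finsupp.single n r) = Finsupp.single (n + k) r := by
  simp [shift]

theorem shift_comm_P {k : ℤ} (h : IsWeylPair (b + k) P Q) (h' : IsWeylPair b P' Q')
    (v : ℤ →₀ R) : shift R k (P v) = P' (shift R k v) := by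
  suffices (shift R k).toLinearMap ∘ₗ P = P' ∘ₗ (shift R k).toLinearMap from
    LinearMap.congr_fun this v
  refine Finsupp.basisSingleOne.ext fun n => ?_
  have index_eq : n - 1 + k = n + k - 1 := by ring
  have coeff_eq : (n : R) + (b + k) = ((n + k : ℤ) : R) + b := by push_cast; ring
  simp only [Finsupp.coe_basisSingleOne, LinearMap.comp_apply, LinearEquiv.coe_coe,
    h.map_P_single, map_smul, shift_single, h'.map_P_single, index_eq, coeff_eq]

theorem shift_comm_Q {k : ℤ} (h : IsWeylPair a P Q) (h' : IsWeylPair b P' Q')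
    (v : ℤ →₀ R) : shift R k (Q v) = Q' (shift R k v) := by
  suffices (shift R k).toLinearMap ∘ₗ Q = Q' ∘ₗ (shift R k).toLinearMap from
    LinearMap.congr_fun this v
  refine Finsupp.basisSingleOne.ext fun n => ?_
  simp only [Finsupp.coe_basisSingleOne, LinearMap.comp_apply, LinearEquiv.coe_coe,
    h.map_Q_single, shift_single, h'.map_Q_single, add_right_comm]

end IsWeylPair

theorem weyl_module_typical_iso_iff_general {R : Type*} [CommRing R] [IsDomain R] {a b : R}
    {P Q P' Q' : (ℤ →₀ R) →ₗ[R] (ℤ →₀ R)} (h : IsWeylPair a P Q) (h' : IsWeylPair b P' Q') :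
    (∃ φ : (ℤ →₀ R) ≃ₗ[R] (ℤ →₀ R),
      (∀ v, φ (P v) = P' (φ v)) ∧ (∀ v, φ (Q v) = Q' (φ v))) ↔
    ∃ k : ℤ, a - b = k := by
  constructor
  · rintro ⟨φ, hP, hQ⟩
    have hφ : φ.toLinearMap ≠ 0 := LinearMap.ne_zero_of_injective φ.injective
    exact h.exists_sub_eq_intCast_of_intertwining h' hφ hP hQ
  · rintro ⟨k, hk⟩
    obtain rfl : a = b + k := eq_add_of_sub_eq' hk
    exact ⟨IsWeylPair.shift R k, h.shift_comm_P h', h.shift_comm_Q h'⟩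

/-- For `λ, μ ∈ ℂ ∖ ℤ`, the Weyl modules `M_λ` and `M_μ` (with basis `(e_n)_{n ∈ ℤ}` realized
as finitely supported functions `ℤ → ℂ`, `Q : e_n ↦ e_{n+1}` and `P : e_n ↦ (n+λ)·e_{n-1}`) are
isomorphic (via a linear isomorphism commuting with the operators) if and only if
`λ - μ ∈ ℤ`. -/
theorem weyl_module_typical_iso_iff
    (lam mu : ℂ) (hlam : ∀ k : ℤ, lam ≠ (k : ℂ)) (hmu : ∀ k : ℤ, mu ≠ (k : ℂ))
    (Pl Ql Pm Qm : (ℤ →₀ ℂ) →ₗ[ℂ] (ℤ →₀ ℂ))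
    (hPl : ∀ n : ℤ, Pl (Finsupp.single n 1) = ((n : ℂ) + lam) • Finsupp.single (n - 1) 1)
    (hQl : ∀ n : ℤ, Ql (Finsupp.single n 1) = Finsupp.single (n + 1) 1)
    (hPm : ∀ n : ℤ, Pm (Finsupp.single n 1) = ((n : ℂ) + mu) • Finsupp.single (n - 1) 1)
    (hQm : ∀ n : ℤ, Qm (Finsupp.single n 1) = Finsupp.single (n + 1) 1) :
    (∃ φ : (ℤ →₀ ℂ) ≃ₗ[ℂ] (ℤ →₀ ℂ),
      (∀ v, φ (Pl v) = Pm (φ v)) ∧ (∀ v, φ (Ql v) = Qm (φ v))) ↔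
    ∃ k : ℤ, lam - mu = (k : ℂ) := by
  exact weyl_module_typical_iso_iff_general ⟨hPl, hQl⟩ ⟨hPm, hQm⟩
end

section
/- Let D : ℂ[x,x⁻¹] → ℂ[x,x⁻¹] be formal differentiation (xⁿ ↦ n·xⁿ⁻¹) and X : ℂ[x,x⁻¹] → ℂ[x,x⁻¹] multiplication by x. The only ℂ-subspaces U ⊆ ℂ[x,x⁻¹] with D(U) ⊆ U and X(U) ⊆ U are 0, the subspace ℂ[x] of polynomials, and ℂ[x,x⁻¹] itself. In particular ℂ[x] admits no (D,X)-invariant complement, so the extension 0 → ℂ[x] → ℂ[x,x⁻¹] → ℂ[x,x⁻¹]/ℂ[x] → 0 of Weyl modules is non-split and the module Typ₀⁺ = (ℂ[x,x⁻¹], D, X) is indecomposable. -/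
/-- Formal differentiation `xⁿ ↦ n·xⁿ⁻¹` on the Laurent polynomial ring `ℂ[x,x⁻¹]`,
realized as finitely supported functions `ℤ →₀ ℂ` (with `xⁿ` corresponding to
`Finsupp.single n 1`). -/
noncomputable def laurentD : (ℤ →₀ ℂ) →ₗ[ℂ] (ℤ →₀ ℂ) :=
  Finsupp.lsum ℂ (fun n : ℤ => (n : ℂ) • Finsupp.lsingle (n - 1))

/-- Multiplication by `x` on the Laurent polynomial ring `ℂ[x,x⁻¹]`, realized as finitely
supported functions `ℤ →₀ ℂ`. -/
noncomputable def laurentX : (ℤ →₀ ℂ) →ₗ[ℂ] (ℤ →₀ ℂ) :=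
  Finsupp.lsum ℂ (fun n : ℤ => Finsupp.lsingle (n + 1))

/-- The subspace `ℂ[x] ⊆ ℂ[x,x⁻¹]` of (honest) polynomials: Laurent polynomials with no
negative-degree terms. -/
noncomputable def polyPart : Submodule ℂ (ℤ →₀ ℂ) where
  carrier := {f | ∀ n : ℤ, n < 0 → f n = 0}
  add_mem' := by
    intro a b ha hb n hn
    simp [ha n hn, hb n hn]
  zero_mem' := by intro n hn; simp
  smul_mem' := by
    intro c f hf n hn
    simp [hf n hn]

/-!
The Euler operator `X ∘ D` is diagonal in the monomial basis with the distinct eigenvalues `n ∈ ℤ`,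
so a Lagrange interpolation polynomial in it projects a Laurent polynomial onto any one of its
terms. An invariant subspace is therefore spanned by monomials, hence determined by its set of
exponents, which is closed under `n ↦ n + 1` and, away from `n = 0`, under `n ↦ n - 1`. Only three
such sets exist. Every nonzero invariant subspace then contains `ℂ[x]`, so two of them always meet
nontrivially.
-/

open Polynomial

section DiagonalEndomorphism

variable {ι R M : Type*}

lemma aeval_apply_of_diagonal [CommSemiring R] [AddCommMonoid M] [Module R M]
    {T : (ι →₀ M) →ₗ[R] (ι →₀ M)} {a : ι → R} (hT : ∀ f i, T f i = a i • f i)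
    (p : R[X]) (f : ι →₀ M) (i : ι) : aeval T p f i = p.eval (a i) • f i := by
  induction p using Polynomial.induction_on generalizing f with
  | C r => simp
  | add p q hp hq => simp [hp, hq, add_smul]
  | monomial n r ih =>
    rw [pow_succ, ← mul_assoc, map_mul, Module.End.mul_apply, ih, aeval_X, hT, eval_mul_X, mul_smul]

lemma single_apply_mem_of_diagonal [Field R] [AddCommMonoid M] [Module R M]
    {T : (ι →₀ M) →ₗ[R] (ι →₀ M)} {a : ι → R} (ha : Function.Injective a)
    (hT : ∀ f i, T f i = a i • f i) {U : Submodule R (ι →₀ M)} (hU : U ∈ Module.End.invtSubmodule T)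
    {f : ι →₀ M} (hf : f ∈ U) (i : ι) : Finsupp.single i (f i) ∈ U := by
  classical
  let nodes := insert i f.support
  have projection : aeval T (Lagrange.basis nodes a i) f = Finsupp.single i (f i) := by
    ext j
    rw [aeval_apply_of_diagonal hT]
    rcases eq_or_ne i j with rfl | hij
    · rw [Lagrange.eval_basis_self ha.injOn (Finset.mem_insert_self _ _), one_smul,
        Finsupp.single_eq_same]
    · rw [Finsupp.single_eq_of_ne' hij]
      by_cases hj : j ∈ f.support
      · rw [Lagrange.eval_basis_of_ne hij (Finset.mem_insert_of_mem hj), zero_smul]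
      · rw [Finsupp.notMem_support_iff.mp hj, smul_zero]
  rw [← projection]
  exact aeval_apply_smul_mem_of_le_comap hf _ T hU

end DiagonalEndomorphism

lemma eq_supported_of_single_apply_mem {ι K : Type*} [DivisionRing K] {U : Submodule K (ι →₀ K)}
    (hU : ∀ f ∈ U, ∀ i, Finsupp.single i (f i) ∈ U) :
    U = Finsupp.supported K K {i | Finsupp.single i 1 ∈ U} := by
  apply le_antisymm
  · intro f hf i hi
    have hfi : f i ≠ 0 := Finsupp.mem_support_iff.mp hi
    simpa [hfi] using U.smul_mem (f i)⁻¹ (hU f hf i)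
  · rw [Finsupp.supported_eq_span_single, Submodule.span_le]
    exact Set.image_subset_iff.mpr fun _ hi => hi

lemma eq_empty_or_eq_Ici_or_eq_univ_of_add_one_mem_of_sub_one_mem {S : Set ℤ} {a : ℤ}
    (hadd : ∀ n ∈ S, n + 1 ∈ S) (hsub : ∀ n ∈ S, n ≠ a → n - 1 ∈ S) :
    S = ∅ ∨ S = Set.Ici a ∨ S = Set.univ := by
  have mem_of_le {m n : ℤ} (hm : m ∈ S) (hmn : m ≤ n) : n ∈ S :=
    Int.leInduction hm (fun k _ hk => hadd k hk) n hmn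
  have mem_of_le_of_lt {m n : ℤ} (hm : m ∈ S) (hma : m < a) (hnm : n ≤ m) : n ∈ S :=
    Int.leInductionDown hm (fun k hkm hk => hsub k hk (by lia)) n hnm
  have base_mem {m : ℤ} (hm : m ∈ S) (ham : a ≤ m) : a ∈ S := by
    induction m, ham using Int.leInduction with
    | base => exact hm
    | succ k hak ih => exact ih (by simpa using hsub (k + 1) hm (by lia))
  rcases S.eq_empty_or_nonempty with hS | ⟨m, hm⟩
  · exact .inl hS
  by_cases hlt : ∃ k ∈ S, k < a
  · obtain ⟨k, hk, hka⟩ := hlt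
    exact .inr <| .inr <| Set.eq_univ_of_forall fun n =>
      (le_total k n).elim (mem_of_le hk) (mem_of_le_of_lt hk hka)
  · push Not at hlt
    exact .inr <| .inl <| Set.Subset.antisymm hlt fun n => mem_of_le (base_mem hm (hlt m hm))

lemma laurentD_single (n : ℤ) (c : ℂ) :
    laurentD (Finsupp.single n c) = Finsupp.single (n - 1) (n * c) := by
  simp [laurentD]

lemma laurentX_single (n : ℤ) (c : ℂ) :
    laurentX (Finsupp.single n c) = Finsupp.single (n + 1) c := by
  simp [laurentX]

lemma laurentX_laurentD_apply (f : ℤ →₀ ℂ) (n : ℤ) : laurentX (laurentD f) n = n * f n := by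
  induction f using Finsupp.induction_linear with
  | zero => simp
  | add f g hf hg => simp [hf, hg, mul_add]
  | single m c =>
    rw [laurentD_single, laurentX_single, sub_add_cancel]
    rcases eq_or_ne m n with rfl | hmn
    · simp
    · simp [Finsupp.single_eq_of_ne' hmn]

lemma polyPart_eq_supported_Ici_zero : polyPart = Finsupp.supported ℂ ℂ (Set.Ici 0) := by
  ext f
  simp [Finsupp.mem_supported', polyPart]

lemma polyPart_ne_bot : polyPart ≠ ⊥ := by
  rw [polyPart_eq_supported_Ici_zero, Submodule.ne_bot_iff]
  exact ⟨Finsupp.single 0 1, Finsupp.single_mem_supported ℂ 1 Set.self_mem_Ici, by simp⟩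

lemma polyPart_ne_top : polyPart ≠ ⊤ := by
  intro h
  have hmem : Finsupp.single (-1) 1 ∈ polyPart := h ▸ Submodule.mem_top
  simpa using hmem (-1) (by decide)

/-- `U` is a submodule of the Weyl module `Typ₀⁺`: it is stable under the action of both generators,
`p` acting as `laurentD` and `q` as `laurentX`. -/
structure IsWeylInvariant (U : Submodule ℂ (ℤ →₀ ℂ)) : Prop where
  laurentD_mem : ∀ f ∈ U, laurentD f ∈ U
  laurentX_mem : ∀ f ∈ U, laurentX f ∈ U

namespace IsWeylInvariant

variable {U V : Submodule ℂ (ℤ →₀ ℂ)}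

lemma eq_supported (hU : IsWeylInvariant U) :
    U = Finsupp.supported ℂ ℂ {n | Finsupp.single n 1 ∈ U} :=
  eq_supported_of_single_apply_mem fun _ hf =>
    single_apply_mem_of_diagonal (T := laurentX ∘ₗ laurentD) Int.cast_injective
      laurentX_laurentD_apply (fun g hg => hU.laurentX_mem _ (hU.laurentD_mem g hg)) hf

lemma single_add_one_mem (hU : IsWeylInvariant U) {n : ℤ} (hn : Finsupp.single n 1 ∈ U) :
    Finsupp.single (n + 1) 1 ∈ U :=
  laurentX_single n 1 ▸ hU.laurentX_mem _ hn

lemma single_sub_one_mem (hU : IsWeylInvariant U) {n : ℤ} (hn : Finsupp.single n 1 ∈ U)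
    (hn0 : n ≠ 0) : Finsupp.single (n - 1) 1 ∈ U := by
  simpa [laurentD_single, hn0] using U.smul_mem (n : ℂ)⁻¹ (hU.laurentD_mem _ hn)

lemma eq_bot_or_eq_polyPart_or_eq_top (hU : IsWeylInvariant U) :
    U = ⊥ ∨ U = polyPart ∨ U = ⊤ := by
  have exponents := eq_empty_or_eq_Ici_or_eq_univ_of_add_one_mem_of_sub_one_mem
    (S := {n | Finsupp.single n 1 ∈ U}) (fun _ => hU.single_add_one_mem)
    (fun _ => hU.single_sub_one_mem)
  rcases exponents with h | h | h
  · exact .inl (by rw [hU.eq_supported, h, Finsupp.supported_empty])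
  · exact .inr (.inl (by rw [hU.eq_supported, h, polyPart_eq_supported_Ici_zero]))
  · exact .inr (.inr (by rw [hU.eq_supported, h, Finsupp.supported_univ]))

lemma eq_bot_or_polyPart_le (hU : IsWeylInvariant U) : U = ⊥ ∨ polyPart ≤ U := by
  rcases hU.eq_bot_or_eq_polyPart_or_eq_top with h | h | h
  · exact .inl h
  · exact .inr h.ge
  · exact .inr (h ▸ le_top)

lemma eq_bot_or_eq_bot_of_disjoint (hU : IsWeylInvariant U) (hV : IsWeylInvariant V)
    (hUV : Disjoint U V) : U = ⊥ ∨ V = ⊥ := by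
  rcases hU.eq_bot_or_polyPart_le with hU_bot | hU_ge
  · exact .inl hU_bot
  rcases hV.eq_bot_or_polyPart_le with hV_bot | hV_ge
  · exact .inr hV_bot
  exact absurd (le_bot_iff.mp (hUV hU_ge hV_ge)) polyPart_ne_bot

lemma not_isCompl_polyPart (hV : IsWeylInvariant V) : ¬ IsCompl polyPart V := by
  intro hcompl
  rcases hV.eq_bot_or_polyPart_le with rfl | hle
  · exact polyPart_ne_top (eq_top_of_isCompl_bot hcompl)
  · exact polyPart_ne_bot (hcompl.disjoint.eq_bot_of_le hle)

end IsWeylInvariant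

/-- The only subspaces of `ℂ[x,x⁻¹]` invariant under both differentiation `D` and
multiplication by `x` are `0`, `ℂ[x]` and `ℂ[x,x⁻¹]`.  In particular `ℂ[x]` has no
`(D,X)`-invariant complement (the extension `0 → ℂ[x] → ℂ[x,x⁻¹] → ℂ[x,x⁻¹]/ℂ[x] → 0` is
non-split), and the Weyl module `Typ₀⁺ = (ℂ[x,x⁻¹], D, X)` is indecomposable. -/
theorem laurent_weyl_submodules_classification :
    (∀ U : Submodule ℂ (ℤ →₀ ℂ),
        (∀ f ∈ U, laurentD f ∈ U) → (∀ f ∈ U, laurentX f ∈ U) →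
        U = ⊥ ∨ U = polyPart ∨ U = ⊤) ∧
    (¬ ∃ V : Submodule ℂ (ℤ →₀ ℂ),
        (∀ f ∈ V, laurentD f ∈ V) ∧ (∀ f ∈ V, laurentX f ∈ V) ∧ IsCompl polyPart V) ∧
    (∀ U V : Submodule ℂ (ℤ →₀ ℂ),
        (∀ f ∈ U, laurentD f ∈ U) → (∀ f ∈ U, laurentX f ∈ U) →
        (∀ f ∈ V, laurentD f ∈ V) → (∀ f ∈ V, laurentX f ∈ V) →
        IsCompl U V → U = ⊥ ∨ V = ⊥) := by
  refine ⟨fun U hD hX => ?_, fun ⟨V, hD, hX, hcompl⟩ => ?_, fun U V hUD hUX hVD hVX hcompl => ?_⟩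
  · exact IsWeylInvariant.eq_bot_or_eq_polyPart_or_eq_top ⟨hD, hX⟩
  · exact IsWeylInvariant.not_isCompl_polyPart ⟨hD, hX⟩ hcompl
  · exact IsWeylInvariant.eq_bot_or_eq_bot_of_disjoint ⟨hUD, hUX⟩ ⟨hVD, hVX⟩ hcompl.disjoint
end

section
/- Let D, X be formal differentiation and multiplication by x on ℂ[x,x⁻¹], and let D̄, X̄ be the induced ℂ-linear operators on the quotient space ℂ[x,x⁻¹]/ℂ[x]. There exists a ℂ-linear isomorphism ψ : ℂ[x,x⁻¹]/ℂ[x] → ℂ[x] such that ψ∘D̄ = X∘ψ and ψ∘X̄ = (−D)∘ψ, where on the target D and X denote differentiation and multiplication by x on ℂ[x]. (That is, the quotient of Typ₀⁺ by its polynomial submodule is isomorphic to the conjugate Weyl module ℂ[x] with p acting as x and q acting as −d/dx.) -/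
/-!
The isomorphism is the formal Borel transform `f ↦ Res₀ f(x) exp(-x y) dx`, a polynomial in `y`.
Its kernel consists of the Laurent polynomials without negative-degree terms. Since residues of
derivatives vanish, integration by parts turns `d/dx` into multiplication by `y`, and
differentiating under the residue turns multiplication by `x` into `-d/dy`.
-/

open Polynomial

/-- The coefficient of `t ^ k` in `exp (-t)`, which is the factor by which the formal Borel
transform rescales `x ^ (-1 - k)`. -/
def borelWeight (k : ℕ) : ℚ := (-1) ^ k / k.factorial

theorem borelWeight_ne_zero (k : ℕ) : borelWeight k ≠ 0 := by
  simp [borelWeight, Nat.factorial_ne_zero]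

theorem succ_mul_borelWeight_succ (k : ℕ) : (k + 1) * borelWeight (k + 1) = -borelWeight k := by
  have hfactorial : (k.factorial : ℚ) ≠ 0 := mod_cast k.factorial_ne_zero
  simp only [borelWeight, Nat.factorial_succ, Nat.cast_mul, Nat.cast_succ]
  field_simp
  ring

section BorelTransform

variable {R : Type*} [Ring R] [Algebra ℚ R]

theorem succ_mul_borelWeight_succ_smul (k : ℕ) (r : R) :
    (k + 1 : R) * borelWeight (k + 1) • r = -(borelWeight k • r) := by
  calc (k + 1 : R) * borelWeight (k + 1) • r
      = ((k + 1) * borelWeight (k + 1)) • r := by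
        rw [mul_smul, ← Nat.cast_succ, ← Nat.cast_succ, Nat.cast_smul_eq_nsmul, nsmul_eq_mul]
    _ = -(borelWeight k • r) := by rw [succ_mul_borelWeight_succ, neg_smul]

variable (R) in
/-- The formal Borel transform `x ^ (-1 - k) ↦ (-1) ^ k / k! • X ^ k`, vanishing on `x ^ n` for
`0 ≤ n`. A Laurent polynomial is encoded by its coefficient function, and `Int.negSucc k` is
`-1 - k`. -/
noncomputable def borelTransform : (ℤ →₀ R) →ₗ[R] R[X] :=
  Finsupp.lsum ℕ (fun k => borelWeight k • monomial k) ∘ₗ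
    Finsupp.lcomapDomain Int.negSucc fun _ _ => Int.negSucc.inj

theorem coeff_borelTransform (f : ℤ →₀ R) (k : ℕ) :
    (borelTransform R f).coeff k = borelWeight k • f (Int.negSucc k) := by
  simp +contextual [borelTransform, Finsupp.lcomapDomain, Finsupp.sum, coeff_monomial]

theorem borelTransform_eq_zero_iff {f : ℤ →₀ R} :
    borelTransform R f = 0 ↔ ∀ n < 0, f n = 0 := by
  have forall_neg_iff : (∀ n < 0, f n = 0) ↔ ∀ k, f (Int.negSucc k) = 0 :=
    ⟨fun h k => h _ (Int.negSucc_lt_zero k), fun h n hn => by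
      obtain ⟨k, rfl⟩ := Int.eq_negSucc_of_lt_zero hn
      exact h k⟩
  simp only [forall_neg_iff, Polynomial.ext_iff, coeff_borelTransform, coeff_zero,
    smul_eq_zero_iff_right (borelWeight_ne_zero _)]

theorem borelTransform_surjective : Function.Surjective (borelTransform R) := by
  intro p
  induction p using Polynomial.induction_on' with
  | add p q hp hq =>
    obtain ⟨f, rfl⟩ := hp
    obtain ⟨g, rfl⟩ := hq
    exact ⟨f + g, map_add _ _ _⟩
  | monomial k a =>
    refine ⟨Finsupp.single (Int.negSucc k) ((borelWeight k)⁻¹ • a), ?_⟩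
    ext j
    obtain rfl | hkj := eq_or_ne k j
    · simp [coeff_borelTransform, smul_inv_smul₀ (borelWeight_ne_zero k)]
    · simp [coeff_borelTransform, coeff_monomial_of_ne, hkj.symm]

theorem borelTransform_eq_X_mul {f g : ℤ →₀ R} (hg : ∀ n : ℤ, g n = (n + 1) * f (n + 1)) :
    borelTransform R g = X * borelTransform R f := by
  ext k
  cases k with
  | zero => simp [coeff_borelTransform, hg]
  | succ k =>
    have index_eq : Int.negSucc (k + 1) + 1 = Int.negSucc k := by omega
    have factor_eq : ((Int.negSucc (k + 1) : ℤ) : R) + 1 = -(k + 1) := by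
      rw [Int.cast_negSucc]; push_cast; abel
    rw [coeff_X_mul, coeff_borelTransform, coeff_borelTransform, hg, index_eq, factor_eq,
      neg_mul, smul_neg, ← mul_smul_comm, succ_mul_borelWeight_succ_smul, neg_neg]

theorem borelTransform_eq_neg_derivative {f g : ℤ →₀ R} (hg : ∀ n : ℤ, g n = f (n - 1)) :
    borelTransform R g = -derivative (borelTransform R f) := by
  ext k
  have index_eq : Int.negSucc k - 1 = Int.negSucc (k + 1) := by omega
  rw [coeff_neg, coeff_derivative, coeff_borelTransform, coeff_borelTransform, hg, index_eq,
    ← Nat.cast_succ, ← Nat.cast_comm, Nat.cast_succ, succ_mul_borelWeight_succ_smul, neg_neg]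

theorem laurent_quotient_iso_conjugate_weyl_module_general
    {D M : (ℤ →₀ R) →ₗ[R] (ℤ →₀ R)} {P : Submodule R (ℤ →₀ R)}
    (hD : ∀ f (n : ℤ), D f n = (n + 1) * f (n + 1)) (hM : ∀ f n, M f n = f (n - 1))
    (hP : ∀ f, f ∈ P ↔ ∀ n < 0, f n = 0) :
    ∃ ψ : ((ℤ →₀ R) ⧸ P) ≃ₗ[R] R[X],
      (∀ f, ψ (Submodule.Quotient.mk (D f)) = X * ψ (Submodule.Quotient.mk f)) ∧
      (∀ f, ψ (Submodule.Quotient.mk (M f)) = -derivative (ψ (Submodule.Quotient.mk f))) := by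
  obtain rfl : P = LinearMap.ker (borelTransform R) := by
    ext f
    rw [hP, LinearMap.mem_ker, borelTransform_eq_zero_iff]
  exact ⟨(borelTransform R).quotKerEquivOfSurjective borelTransform_surjective,
    fun f => borelTransform_eq_X_mul (hD f), fun f => borelTransform_eq_neg_derivative (hM f)⟩

end BorelTransform

theorem laurentD_apply (f : ℤ →₀ ℂ) (n : ℤ) : laurentD f n = (n + 1) * f (n + 1) := by
  induction f using Finsupp.induction_linear with
  | zero => simp
  | add f g hf hg => simp [hf, hg, mul_add]
  | single m c =>
    obtain rfl | hmn := eq_or_ne m (n + 1)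
    · simp [laurentD]
    · simp [laurentD, hmn, sub_eq_iff_eq_add]

theorem laurentX_apply (f : ℤ →₀ ℂ) (n : ℤ) : laurentX f n = f (n - 1) := by
  induction f using Finsupp.induction_linear with
  | zero => simp
  | add f g hf hg => simp [hf, hg]
  | single m c => simp [laurentX, Finsupp.single_apply, eq_sub_iff_add_eq]

/-- The quotient of `Typ₀⁺ = (ℂ[x,x⁻¹], D, X)` by its polynomial submodule `ℂ[x]` is
isomorphic to the conjugate Weyl module `ℂ[x]` with `p` acting as `x` and `q` acting as
`−d/dx`: there is a linear isomorphism `ψ` from the quotient to `ℂ[x]` with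
`ψ ∘ D̄ = X ∘ ψ` and `ψ ∘ X̄ = (−D) ∘ ψ`. -/
theorem laurent_quotient_iso_conjugate_weyl_module :
    ∃ ψ : ((ℤ →₀ ℂ) ⧸ polyPart) ≃ₗ[ℂ] Polynomial ℂ,
      (∀ f : ℤ →₀ ℂ,
        ψ (Submodule.Quotient.mk (laurentD f)) =
          Polynomial.X * ψ (Submodule.Quotient.mk f)) ∧
      (∀ f : ℤ →₀ ℂ,
        ψ (Submodule.Quotient.mk (laurentX f)) =
          - Polynomial.derivative (ψ (Submodule.Quotient.mk f))) :=
  laurent_quotient_iso_conjugate_weyl_module_general laurentD_apply laurentX_apply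
    fun _ => Iff.rfl
end

section
/- Let M be a ℂ-vector space with ℂ-linear endomorphisms P, Q satisfying P∘Q − Q∘P = id. Suppose S ⊆ M is a subspace with P(S) ⊆ S and Q(S) ⊆ S such that: (a) there is a ℂ-linear isomorphism S → ℂ[x] intertwining (P|_S, Q|_S) with (D, X); (b) there is a ℂ-linear isomorphism M/S → ℂ[x] intertwining the induced operators (P̄, Q̄) with (X, −D); and (c) S admits no complementary subspace invariant under both P and Q. Then there is a ℂ-linear isomorphism M → ℂ[x,x⁻¹] carrying S onto ℂ[x] and intertwining (P, Q) with (D, X). (That is, Typ₀⁺ is uniquely characterised by its non-split short exact sequence of Weyl modules.) -/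
/-!
Let `K` be a field of characteristic zero. Lift `1 ∈ K[x] ≅ M/S` to `v ∈ M`. Then `Q v ∈ S ≅ K[x]`,
and correcting `v` by an element of `S` makes `Q v` a constant `c`. If `c = 0`, the vectors `Pᵏ v`
span an invariant complement of `S`, so in a non-split extension `c ≠ 0` and we may rescale to
`c = 1`. Now `v` plays the role of `x⁻¹`: since `Dᵏ x⁻¹ = (-1)ᵏ k! x⁻ᵏ⁻¹`, the images of the
`xⁿ` in `S` together with the vectors `(-1)ᵏ / k! • Pᵏ v` form a basis of `M` on which `P` and `Q`
act as `D` and `X` act on the monomials of `K[x, x⁻¹]`.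
-/

open Polynomial Module

section Laurent

variable (K : Type*) [CommRing K]

/-- Formal differentiation `xⁿ ↦ n xⁿ⁻¹` on the Laurent polynomials over `K`, encoded as `ℤ →₀ K`:
`laurentD` over an arbitrary commutative ring. -/
noncomputable def laurentDerivative : (ℤ →₀ K) →ₗ[K] (ℤ →₀ K) :=
  Finsupp.lsum K (fun n : ℤ => (n : K) • Finsupp.lsingle (n - 1))

/-- Multiplication by `x` on the Laurent polynomials over `K`, encoded as `ℤ →₀ K`: `laurentX` over
an arbitrary commutative ring. -/
noncomputable def laurentMulX : (ℤ →₀ K) →ₗ[K] (ℤ →₀ K) :=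
  Finsupp.lsum K (fun n : ℤ => Finsupp.lsingle (n + 1))

theorem polyPart_eq_supported : polyPart = Finsupp.supported ℂ ℂ (Set.Ici (0 : ℤ)) := by
  ext a
  simp only [Finsupp.mem_supported', Set.mem_Ici, not_le]
  rfl

variable {K} {M : Type*} [AddCommGroup M] [Module K M]

theorem repr_apply_eq_laurentDerivative (b : Basis ℤ K M) {P : M →ₗ[K] M}
    (hP : ∀ n, P (b n) = (n : K) • b (n - 1)) (m : M) :
    b.repr (P m) = laurentDerivative K (b.repr m) := by
  suffices b.repr.toLinearMap ∘ₗ P = laurentDerivative K ∘ₗ b.repr.toLinearMap from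
    LinearMap.congr_fun this m
  exact b.ext fun n => by simp [laurentDerivative, hP]

theorem repr_apply_eq_laurentMulX (b : Basis ℤ K M) {Q : M →ₗ[K] M}
    (hQ : ∀ n, Q (b n) = b (n + 1)) (m : M) :
    b.repr (Q m) = laurentMulX K (b.repr m) := by
  suffices b.repr.toLinearMap ∘ₗ Q = laurentMulX K ∘ₗ b.repr.toLinearMap from
    LinearMap.congr_fun this m
  exact b.ext fun n => by simp [laurentMulX, hQ]

end Laurent

section LinearAlgebra

theorem map_repr_span_image {R M ι : Type*} [Semiring R] [AddCommMonoid M] [Module R M]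
    (b : Basis ι R M) (s : Set ι) :
    (Submodule.span R (b '' s)).map b.repr.toLinearMap = Finsupp.supported R R s := by
  rw [Submodule.map_span, Set.image_image, Finsupp.supported_eq_span_single]
  simp

variable {R M N N' ι κ : Type*} [Ring R] [AddCommGroup M] [Module R M] [AddCommGroup N]
  [Module R N] [AddCommGroup N'] [Module R N']

theorem isCompl_ker_range_of_comp_eq_id {f : M →ₗ[R] N} {s : N →ₗ[R] M}
    (hs : f ∘ₗ s = LinearMap.id) : IsCompl (LinearMap.ker f) (LinearMap.range s) := by
  have hfs (n : N) : f (s n) = n := LinearMap.congr_fun hs n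
  constructor
  · rw [Submodule.disjoint_def]
    rintro _ hker ⟨n, rfl⟩
    rw [← hfs n, LinearMap.mem_ker.mp hker, map_zero]
  · rw [codisjoint_iff, eq_top_iff]
    intro m _
    have hmem : m - s (f m) ∈ LinearMap.ker f := by simp [hfs]
    exact Submodule.mem_sup.mpr ⟨_, hmem, _, ⟨f m, rfl⟩, sub_add_cancel _ _⟩

theorem exists_basis_sum_of_exact_of_comp_eq_id {e : N →ₗ[R] M} {f : M →ₗ[R] N'}
    {s : N' →ₗ[R] M} (hexact : Function.Exact e f) (he : Function.Injective e)
    (hs : f ∘ₗ s = LinearMap.id) (b : Basis ι R N) (b' : Basis κ R N') :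
    ∃ B : Basis (ι ⊕ κ) R M, (∀ i, B (.inl i) = e (b i)) ∧ ∀ j, B (.inr j) = s (b' j) := by
  let E : M ≃ₗ[R] N × N' := (hexact.splitSurjectiveEquiv he ⟨s, hs⟩).1
  have hE (x : N × N') : E.symm x = e x.1 + s x.2 := rfl
  exact ⟨(b.prod b').map E.symm, by simp [hE], by simp [hE]⟩

end LinearAlgebra

section WeylRelation

variable {K : Type*} [CommRing K]

theorem mul_aeval_eq_sub_aeval_derivative {A : Type*} [Ring A] [Algebra K A] {p q : A}
    (hpq : p * q - q * p = 1) (r : K[X]) :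
    q * aeval p r = aeval p r * q - aeval p (derivative r) := by
  induction r using Polynomial.induction_on with
  | C a => simp [Algebra.commutes]
  | add r r' hr hr' => simp only [map_add, mul_add, add_mul, hr, hr']; abel
  | monomial n a ih =>
    have hqp : q * p = p * q - 1 := by rw [← hpq]; abel
    rw [pow_succ, ← mul_assoc, derivative_mul, derivative_X, mul_one]
    simp only [map_mul, map_add, aeval_X] at ih ⊢
    rw [← mul_assoc, ih, sub_mul, mul_assoc _ q p, hqp, mul_sub]
    noncomm_ring

variable {M : Type*} [AddCommGroup M] [Module K M] {P Q : M →ₗ[K] M} {v : M}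

/-- The `K`-linear map `r ↦ r(P) v`, whose range is the `P`-invariant subspace generated by `v`. -/
noncomputable def polynomialOrbit (P : M →ₗ[K] M) (v : M) : K[X] →ₗ[K] M :=
  (aeval P).toLinearMap.flip v

theorem polynomialOrbit_apply (r : K[X]) : polynomialOrbit P v r = aeval P r v :=
  rfl

theorem polynomialOrbit_X_pow (n : ℕ) : polynomialOrbit P v (X ^ n) = (P ^ n) v := by
  simp [polynomialOrbit_apply]

theorem apply_polynomialOrbit (r : K[X]) :
    P (polynomialOrbit P v r) = polynomialOrbit P v (X * r) := by
  simp [polynomialOrbit_apply]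

theorem apply_polynomialOrbit_of_commutator (hPQ : P ∘ₗ Q - Q ∘ₗ P = LinearMap.id) (r : K[X]) :
    Q (polynomialOrbit P v r) =
      polynomialOrbit P (Q v) r - polynomialOrbit P v (derivative r) :=
  LinearMap.congr_fun (mul_aeval_eq_sub_aeval_derivative hPQ r) v

theorem map_polynomialOrbit {f : M →ₗ[K] K[X]} (hfP : ∀ m, f (P m) = X * f m) (r : K[X]) :
    f (polynomialOrbit P v r) = r * f v := by
  induction r using Polynomial.induction_on with
  | C a => simp [polynomialOrbit_apply, smul_eq_C_mul]
  | add r r' hr hr' => rw [map_add, map_add, hr, hr', add_mul]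
  | monomial n a ih =>
    rw [pow_succ', mul_left_comm, ← apply_polynomialOrbit, hfP, ih, ← mul_assoc]

variable {e : K[X] →ₗ[K] M} {f : M →ₗ[K] K[X]}

theorem comp_polynomialOrbit_eq_id (hfP : ∀ m, f (P m) = X * f m) (hv : f v = 1) :
    f ∘ₗ polynomialOrbit P v = LinearMap.id :=
  LinearMap.ext fun r => by simp [map_polynomialOrbit hfP, hv]

theorem exists_invariant_isCompl_ker (hPQ : P ∘ₗ Q - Q ∘ₗ P = LinearMap.id)
    (hfP : ∀ m, f (P m) = X * f m) (hv : f v = 1) (hQv : Q v = 0) :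
    ∃ V : Submodule K M, (∀ m ∈ V, P m ∈ V) ∧ (∀ m ∈ V, Q m ∈ V) ∧
      IsCompl (LinearMap.ker f) V := by
  refine ⟨LinearMap.range (polynomialOrbit P v), ?_, ?_,
    isCompl_ker_range_of_comp_eq_id (comp_polynomialOrbit_eq_id hfP hv)⟩
  · rintro _ ⟨r, rfl⟩
    exact ⟨X * r, (apply_polynomialOrbit r).symm⟩
  · rintro _ ⟨r, rfl⟩
    refine ⟨-derivative r, ?_⟩
    rw [apply_polynomialOrbit_of_commutator hPQ, hQv]
    simp [polynomialOrbit_apply]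

theorem exists_lift_one_apply_eq_C (hexact : Function.Exact e f) (hsurj : Function.Surjective f)
    (heQ : ∀ p, Q (e p) = e (X * p)) (hfQ : ∀ m, f (Q m) = -derivative (f m)) :
    ∃ (v : M) (c : K), f v = 1 ∧ Q v = e (C c) := by
  obtain ⟨w, hw⟩ := hsurj 1
  obtain ⟨p, hp⟩ : Q w ∈ Set.range e := (hexact _).mp (by simp [hfQ, hw])
  refine ⟨w - e p.divX, p.coeff 0, by rw [map_sub, hexact.apply_apply_eq_zero, hw, sub_zero], ?_⟩
  calc Q (w - e p.divX) = e (p - X * p.divX) := by rw [map_sub, heQ, ← hp, map_sub]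
    _ = e (C (p.coeff 0)) := by rw [sub_eq_of_eq_add' (X_mul_divX_add p).symm]

end WeylRelation

section LaurentFamily

variable {K : Type*} [Field K] {M : Type*} [AddCommGroup M] [Module K M]
  {P Q : M →ₗ[K] M} {e : K[X] →ₗ[K] M} {f : M →ₗ[K] K[X]} {v : M}

/-- The vectors of `M` corresponding to the Laurent monomials `xⁿ`, when `e` is the inclusion of the
polynomials and `v` corresponds to `x⁻¹`; the negative powers come from
`Dᵏ x⁻¹ = (-1)ᵏ k! x⁻ᵏ⁻¹`, where `Int.negSucc k` is `-k - 1`. -/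
noncomputable def laurentFamily (e : K[X] →ₗ[K] M) (P : M →ₗ[K] M) (v : M) : ℤ → M
  | Int.ofNat n => e (X ^ n)
  | Int.negSucc k => ((-1) ^ k / (k.factorial : K)) • (P ^ k) v

theorem neg_succ_mul_neg_one_pow_div_factorial [CharZero K] (k : ℕ) :
    -((k : K) + 1) * ((-1) ^ (k + 1) / ((k + 1).factorial : K)) =
      (-1) ^ k / (k.factorial : K) := by
  have hk : (k : K) + 1 ≠ 0 := k.cast_add_one_ne_zero
  rw [Nat.factorial_succ]
  push_cast
  field_simp
  ring

theorem apply_laurentFamily_eq_smul [CharZero K] (heP : ∀ p, P (e p) = e (derivative p)) (n : ℤ) :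
    P (laurentFamily e P v n) = (n : K) • laurentFamily e P v (n - 1) := by
  rcases n with (_ | n) | k
  · simp [laurentFamily, heP]
  · have hpred : Int.ofNat (n + 1) - 1 = Int.ofNat n := by simp
    rw [hpred, laurentFamily, laurentFamily, heP, derivative_X_pow_succ, ← smul_eq_C_mul, map_smul]
    simp
  · have hpred : Int.negSucc k - 1 = Int.negSucc (k + 1) := by omega
    rw [hpred, laurentFamily, laurentFamily, map_smul, smul_smul, Int.cast_negSucc, Nat.cast_succ,
      neg_succ_mul_neg_one_pow_div_factorial, pow_succ' P, Module.End.mul_apply]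

theorem apply_laurentFamily_eq_succ [CharZero K] (hPQ : P ∘ₗ Q - Q ∘ₗ P = LinearMap.id)
    (heP : ∀ p, P (e p) = e (derivative p)) (heQ : ∀ p, Q (e p) = e (X * p)) (hQv : Q v = e 1)
    (n : ℤ) : Q (laurentFamily e P v n) = laurentFamily e P v (n + 1) := by
  rcases n with n | _ | k
  · exact (heQ _).trans (congrArg e (pow_succ' X n).symm)
  · simp [laurentFamily, hQv]
  · have hsucc : Int.negSucc (k + 1) + 1 = Int.negSucc k := by omega
    have hpow : (P ^ (k + 1)) (e 1) = 0 := by simp [pow_succ, heP]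
    have hcomm : Q ((P ^ (k + 1)) v) = -((k : K) + 1) • (P ^ k) v := by
      have h := apply_polynomialOrbit_of_commutator (v := v) hPQ (X ^ (k + 1))
      rw [derivative_X_pow_succ, ← smul_eq_C_mul, map_smul] at h
      simp only [polynomialOrbit_X_pow] at h
      rw [h, hQv, hpow, zero_sub, neg_smul]
    rw [hsucc, laurentFamily, laurentFamily, map_smul, hcomm, smul_smul, mul_comm,
      neg_succ_mul_neg_one_pow_div_factorial]

theorem span_laurentFamily_image_Ici_zero :
    Submodule.span K (laurentFamily e P v '' Set.Ici 0) = LinearMap.range e := by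
  have himage : laurentFamily e P v '' Set.Ici 0 = e '' Set.range (basisMonomials K) := by
    rw [← Set.range_comp]
    ext m
    constructor
    · rintro ⟨n | k, hn, rfl⟩
      · exact ⟨n, by simp [laurentFamily, X_pow_eq_monomial]⟩
      · exact absurd hn (Int.negSucc_lt_zero k).not_ge
    · rintro ⟨n, rfl⟩
      exact ⟨n, Int.natCast_nonneg n, by simp [laurentFamily, X_pow_eq_monomial]⟩
  rw [himage, ← Submodule.map_span, (basisMonomials K).span_eq, Submodule.map_top]

theorem exists_basis_coe_eq_laurentFamily [CharZero K] (hexact : Function.Exact e f)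
    (he : Function.Injective e) (hfP : ∀ m, f (P m) = X * f m) (hv : f v = 1) :
    ∃ B : Basis ℤ K M, ⇑B = laurentFamily e P v := by
  have hunit (k : ℕ) : IsUnit ((-1) ^ k / (k.factorial : K)) :=
    (div_ne_zero (by simp) (by exact_mod_cast k.factorial_ne_zero)).isUnit
  obtain ⟨B, hB_inl, hB_inr⟩ := exists_basis_sum_of_exact_of_comp_eq_id hexact he
    (comp_polynomialOrbit_eq_id hfP hv) (basisMonomials K) ((basisMonomials K).isUnitSMul hunit)
  refine ⟨B.reindex Equiv.intEquivNatSumNat.symm, funext ?_⟩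
  rintro (n | k)
  · rw [Basis.reindex_apply]
    exact (hB_inl n).trans (by simp [laurentFamily, X_pow_eq_monomial])
  · rw [Basis.reindex_apply]
    exact (hB_inr k).trans (by
      simp [laurentFamily, Basis.isUnitSMul_apply, ← X_pow_eq_monomial, polynomialOrbit_X_pow])

end LaurentFamily

theorem weyl_module_typzeroplus_unique_general
    {K : Type*} [Field K] [CharZero K] {M : Type*} [AddCommGroup M] [Module K M]
    (P Q : M →ₗ[K] M) (hPQ : P ∘ₗ Q - Q ∘ₗ P = LinearMap.id) (S : Submodule K M)
    (ha : ∃ e : K[X] →ₗ[K] M, Function.Injective e ∧ LinearMap.range e = S ∧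
      ∀ p : K[X], P (e p) = e (derivative p) ∧ Q (e p) = e (X * p))
    (hb : ∃ f : M →ₗ[K] K[X], Function.Surjective f ∧ LinearMap.ker f = S ∧
      ∀ m : M, f (P m) = X * f m ∧ f (Q m) = -derivative (f m))
    (hc : ¬ ∃ V : Submodule K M,
      (∀ m ∈ V, P m ∈ V) ∧ (∀ m ∈ V, Q m ∈ V) ∧ IsCompl S V) :
    ∃ g : M ≃ₗ[K] (ℤ →₀ K),
      S.map (g : M →ₗ[K] (ℤ →₀ K)) = Finsupp.supported K K (Set.Ici 0) ∧
      (∀ m : M, g (P m) = laurentDerivative K (g m)) ∧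
      (∀ m : M, g (Q m) = laurentMulX K (g m)) := by
  obtain ⟨e, he, hrange, hePQ⟩ := ha
  obtain ⟨f, hf, rfl, hfPQ⟩ := hb
  have hfP (m : M) := (hfPQ m).1
  obtain ⟨v, c, hv, hQv⟩ := exists_lift_one_apply_eq_C (LinearMap.exact_iff.mpr hrange.symm) hf
    (fun p => (hePQ p).2) (fun m => (hfPQ m).2)
  have hc₀ : c ≠ 0 := by
    rintro rfl
    exact hc (exists_invariant_isCompl_ker hPQ hfP hv (by simpa using hQv))
  have hrange' : LinearMap.range (c • e) = LinearMap.ker f := by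
    rw [LinearMap.range_smul e c hc₀, hrange]
  have heP' (p : K[X]) : P ((c • e) p) = (c • e) (derivative p) := by simp [(hePQ p).1]
  have heQ' (p : K[X]) : Q ((c • e) p) = (c • e) (X * p) := by simp [(hePQ p).2]
  have hQv' : Q v = (c • e) 1 := by
    rw [hQv, LinearMap.smul_apply, ← map_smul, smul_eq_C_mul, mul_one]
  obtain ⟨B, hB⟩ := exists_basis_coe_eq_laurentFamily (LinearMap.exact_iff.mpr hrange'.symm)
    ((smul_right_injective M hc₀).comp he) hfP hv
  refine ⟨B.repr, ?_, repr_apply_eq_laurentDerivative B ?_, repr_apply_eq_laurentMulX B ?_⟩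
  · rw [← map_repr_span_image B, hB, span_laurentFamily_image_Ici_zero, hrange']
  · simpa only [hB] using apply_laurentFamily_eq_smul heP'
  · simpa only [hB] using apply_laurentFamily_eq_succ hPQ heP' heQ' hQv'

/-- `Typ₀⁺` is uniquely characterised by its non-split short exact sequence of Weyl modules:
if `M` is a Weyl module (`P∘Q − Q∘P = id`) with an invariant subspace `S` such that (a) `S`
is isomorphic to the Weyl module `(ℂ[x], D, X)`, (b) `M/S` is isomorphic to the conjugate
Weyl module `(ℂ[x], X, −D)`, and (c) `S` has no invariant complement, then `M` is isomorphic
to `Typ₀⁺ = (ℂ[x,x⁻¹], D, X)` by an isomorphism carrying `S` onto `ℂ[x]`. -/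
theorem weyl_module_typzeroplus_unique
    {M : Type} [AddCommGroup M] [Module ℂ M]
    (P Q : M →ₗ[ℂ] M) (hPQ : P ∘ₗ Q - Q ∘ₗ P = LinearMap.id)
    (S : Submodule ℂ M) (hPS : ∀ m ∈ S, P m ∈ S) (hQS : ∀ m ∈ S, Q m ∈ S)
    -- (a): `S` is isomorphic to the Weyl module `(ℂ[x], D, X)`
    (ha : ∃ e : Polynomial ℂ →ₗ[ℂ] M, Function.Injective e ∧ LinearMap.range e = S ∧
      ∀ p : Polynomial ℂ, P (e p) = e (Polynomial.derivative p) ∧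
        Q (e p) = e (Polynomial.X * p))
    -- (b): `M/S` is isomorphic to the conjugate Weyl module `(ℂ[x], X, −D)`
    (hb : ∃ f : M →ₗ[ℂ] Polynomial ℂ, Function.Surjective f ∧ LinearMap.ker f = S ∧
      ∀ m : M, f (P m) = Polynomial.X * f m ∧
        f (Q m) = - Polynomial.derivative (f m))
    -- (c): `S` has no `(P,Q)`-invariant complement
    (hc : ¬ ∃ V : Submodule ℂ M,
      (∀ m ∈ V, P m ∈ V) ∧ (∀ m ∈ V, Q m ∈ V) ∧ IsCompl S V) :
    ∃ g : M ≃ₗ[ℂ] (ℤ →₀ ℂ),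
      S.map (g : M →ₗ[ℂ] (ℤ →₀ ℂ)) = polyPart ∧
      (∀ m : M, g (P m) = laurentD (g m)) ∧
      (∀ m : M, g (Q m) = laurentX (g m)) := by
  rw [polyPart_eq_supported]
  exact weyl_module_typzeroplus_unique_general P Q hPQ S ha hb hc
end

section
/- Let D, X be formal differentiation and multiplication by x on ℂ[x,x⁻¹]. Every ℂ-linear endomorphism φ of ℂ[x,x⁻¹] satisfying φ∘D = D∘φ and φ∘X = X∘φ is a scalar multiple of the identity. (In particular the Weyl module Typ₀⁺ has endomorphism ring ℂ and is indecomposable.) -/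
/-!
The Euler operator `X ∘ D` acts on `xⁿ` by the scalar `n`, so over a torsion-free ring its
`n`-eigenvectors are the multiples of `xⁿ`. An endomorphism commuting with `D` and `X` commutes with
`X ∘ D`, hence sends each `xⁿ` to a multiple `cₙ xⁿ`; commuting with `X` forces `cₙ₊₁ = cₙ`.
-/

section LaurentOperators

variable (R : Type*) [CommRing R]

/-- Formal differentiation `xⁿ ↦ n·xⁿ⁻¹` on Laurent polynomials over a commutative ring `R`, encoded
as in `laurentD`, which is the case `R = ℂ`. -/
noncomputable def laurentDeriv : Module.End R (ℤ →₀ R) :=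
  Finsupp.lsum R fun n : ℤ => (n : R) • Finsupp.lsingle (n - 1)

/-- Multiplication by `x` on Laurent polynomials over a commutative ring `R`, encoded as in
`laurentX`, which is the case `R = ℂ`. -/
noncomputable def laurentShift : Module.End R (ℤ →₀ R) :=
  Finsupp.lsum R fun n : ℤ => Finsupp.lsingle (n + 1)

/-- The Euler operator `x · d/dx` on Laurent polynomials over `R`, whose eigenspaces single out the
monomials. -/
noncomputable def laurentEuler : Module.End R (ℤ →₀ R) :=
  laurentShift R * laurentDeriv R

variable {R}

theorem laurentDeriv_single (n : ℤ) (r : R) :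
    laurentDeriv R (Finsupp.single n r) = n • Finsupp.single (n - 1) r := by
  simp [laurentDeriv]

theorem laurentShift_single (n : ℤ) (r : R) :
    laurentShift R (Finsupp.single n r) = Finsupp.single (n + 1) r := by
  simp [laurentShift]

theorem laurentEuler_single (n : ℤ) (r : R) :
    laurentEuler R (Finsupp.single n r) = n • Finsupp.single n r := by
  rw [laurentEuler, Module.End.mul_apply, laurentDeriv_single, map_zsmul, laurentShift_single,
    sub_add_cancel]

theorem laurentShift_apply_add_one (f : ℤ →₀ R) (n : ℤ) :
    laurentShift R f (n + 1) = f n := by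
  induction f using Finsupp.induction_linear with
  | zero => simp
  | add f g hf hg => rw [map_add (laurentShift R), Finsupp.add_apply, Finsupp.add_apply, hf, hg]
  | single m r => simp [laurentShift_single, Finsupp.single_apply]

theorem laurentEuler_apply (f : ℤ →₀ R) (n : ℤ) :
    laurentEuler R f n = n • f n := by
  induction f using Finsupp.induction_linear with
  | zero => simp
  | add f g hf hg => rw [map_add, Finsupp.add_apply, Finsupp.add_apply, hf, hg, smul_add]
  | single m r =>
    rw [laurentEuler_single, Finsupp.smul_apply]
    obtain rfl | hmn := eq_or_ne m n
    · rfl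
    · simp only [Finsupp.single_eq_of_ne' hmn, smul_zero]

theorem eq_single_of_laurentEuler_eq_zsmul [IsAddTorsionFree R] {f : ℤ →₀ R} {n : ℤ}
    (hf : laurentEuler R f = n • f) : f = Finsupp.single n (f n) := by
  ext m
  obtain rfl | hnm := eq_or_ne n m
  · rw [Finsupp.single_eq_same]
  · have eigen_coeff : m • f m = n • f m := by
      rw [← laurentEuler_apply, hf, Finsupp.smul_apply]
    have coeff_eq_zero : f m = 0 := by
      by_contra hfm
      exact hnm (smul_left_injective ℤ hfm eigen_coeff).symm
    rw [coeff_eq_zero, Finsupp.single_eq_of_ne' hnm]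

theorem map_single_eq_single_of_commute_laurentEuler [IsAddTorsionFree R]
    {φ : Module.End R (ℤ →₀ R)} (hφ : Commute φ (laurentEuler R)) (n : ℤ) (r : R) :
    φ (Finsupp.single n r) = Finsupp.single n (φ (Finsupp.single n r) n) := by
  apply eq_single_of_laurentEuler_eq_zsmul
  calc laurentEuler R (φ (Finsupp.single n r))
      = φ (laurentEuler R (Finsupp.single n r)) := (LinearMap.congr_fun hφ.eq _).symm
    _ = n • φ (Finsupp.single n r) := by rw [laurentEuler_single, map_zsmul]

theorem periodic_diagonal_of_commute_laurentShift {φ : Module.End R (ℤ →₀ R)}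
    (hφ : Commute φ (laurentShift R)) (r : R) :
    Function.Periodic (fun n : ℤ => φ (Finsupp.single n r) n) 1 := fun n =>
  calc φ (Finsupp.single (n + 1) r) (n + 1)
      = φ (laurentShift R (Finsupp.single n r)) (n + 1) := by rw [laurentShift_single]
    _ = laurentShift R (φ (Finsupp.single n r)) (n + 1) :=
        DFunLike.congr_fun (LinearMap.congr_fun hφ.eq _) _
    _ = φ (Finsupp.single n r) n := laurentShift_apply_add_one _ n

theorem laurent_weyl_module_endomorphisms_scalar_general [IsAddTorsionFree R]
    (φ : Module.End R (ℤ →₀ R)) (hD : Commute φ (laurentDeriv R))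
    (hX : Commute φ (laurentShift R)) :
    ∃ c : R, φ = c • LinearMap.id := by
  refine ⟨φ (Finsupp.single 0 1) 0, Finsupp.lhom_ext' fun n => LinearMap.ext_ring ?_⟩
  have diagonal_const : φ (Finsupp.single n 1) n = φ (Finsupp.single 0 1) 0 := by
    simpa only [mul_one, Int.cast_id] using
      (periodic_diagonal_of_commute_laurentShift hX 1).int_mul_eq n
  calc φ (Finsupp.single n 1)
      = Finsupp.single n (φ (Finsupp.single n 1) n) :=
        map_single_eq_single_of_commute_laurentEuler (hX.mul_right hD) n 1
    _ = φ (Finsupp.single 0 1) 0 • Finsupp.single n 1 := by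
        rw [diagonal_const, Finsupp.smul_single_one]

end LaurentOperators

/-- Every linear endomorphism of `ℂ[x,x⁻¹]` commuting with both differentiation `D` and
multiplication by `x` is a scalar multiple of the identity; in particular the Weyl module
`Typ₀⁺` has endomorphism ring `ℂ`. -/
theorem laurent_weyl_module_endomorphisms_scalar
    (φ : (ℤ →₀ ℂ) →ₗ[ℂ] (ℤ →₀ ℂ))
    (hD : φ ∘ₗ laurentD = laurentD ∘ₗ φ)
    (hX : φ ∘ₗ laurentX = laurentX ∘ₗ φ) :
    ∃ c : ℂ, φ = c • LinearMap.id :=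
  laurent_weyl_module_endomorphisms_scalar_general φ hD hX
end

section
/- Let W be the rank 1 Weyl algebra over ℂ, the unital associative ℂ-algebra generated by p and q subject only to the relation pq − qp = 1. Let M be a simple W-module such that M is spanned by the eigenvectors of the operator induced by N = qp (i.e. N acts semisimply on M). Then M is isomorphic as a W-module to one of the following: (i) ℂ[x] with p acting as d/dx and q as multiplication by x; (ii) ℂ[x] with p acting as multiplication by x and q as −d/dx; (iii) for some λ ∈ ℂ∖ℤ, the module with basis (e_n)_{n∈ℤ} on which q·e_n = e_{n+1} and p·e_n = (n+λ)·e_{n−1}. -/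
/-- The operator `e_n ↦ (n+λ)·e_{n-1}` on the space `ℤ →₀ ℂ` with basis `(e_n)_{n ∈ ℤ}`:
the action of `p = d/dx` on the Weyl module `ℂ[x,x⁻¹]x^λ`. -/
noncomputable def weylP (lam : ℂ) : (ℤ →₀ ℂ) →ₗ[ℂ] (ℤ →₀ ℂ) :=
  Finsupp.lsum ℂ (fun n : ℤ => ((n : ℂ) + lam) • Finsupp.lsingle (n - 1))

/-- The shift operator `e_n ↦ e_{n+1}` on the space `ℤ →₀ ℂ` with basis `(e_n)_{n ∈ ℤ}`:
the action of `q = x` on the Weyl module `ℂ[x,x⁻¹]x^λ`. -/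
noncomputable def weylQ : (ℤ →₀ ℂ) →ₗ[ℂ] (ℤ →₀ ℂ) :=
  Finsupp.lsum ℂ (fun n : ℤ => Finsupp.lsingle (n + 1))

/-!
A module over the Weyl algebra is a vector space with two operators satisfying `⁅P, Q⁆ = 1`, and the
pair `(-Q, P)` satisfies the same relation. If `P` kills some `v ≠ 0`, then `f ↦ f(Q) v` intertwines
`(d/dx, x)` with `(P, Q)`; its kernel is stable under `d/dx` and omits `1`, so it is zero, and the
map is onto by simplicity. If `Q` kills a nonzero vector, the same applies to `(-Q, P)`.

Otherwise both operators are injective. They map eigenvectors of `Q * P` for `λ` to eigenvectors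
for `λ - 1` and `λ + 1`, so by simplicity the existence of one eigenvector makes the eigenspaces
span `M`; hence `Q * P`, and therefore `Q`, is onto. Starting from an eigenvector `v` for `λ`, the
vectors `Q ^ n v`, `n ∈ ℤ`, are eigenvectors for the distinct eigenvalues `n + λ`, and `P` and `Q`
preserve their span. Injectivity of `P` keeps `n + λ` away from `0`.
-/

open Module Polynomial

section Commutator

variable {A : Type*} [Ring A]

theorem ring_lie_mul (a b c : A) : ⁅a, b * c⁆ = ⁅a, b⁆ * c + b * ⁅a, c⁆ := by
  simp only [Ring.lie_def]
  noncomm_ring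

theorem lie_aeval_eq_aeval_derivative {R : Type*} [CommSemiring R] [Algebra R A] {p q : A}
    (hpq : ⁅p, q⁆ = 1) (f : R[X]) : ⁅p, aeval q f⁆ = aeval q (derivative f) := by
  induction f using Polynomial.induction_on with
  | C a => simp [Ring.lie_def, Algebra.commutes]
  | add f g hf hg =>
    simp only [map_add, ← hf, ← hg, Ring.lie_def, mul_add, add_mul, add_sub_add_comm]
  | monomial n a ih =>
    rw [pow_succ, ← mul_assoc, map_mul, aeval_X, ring_lie_mul, ih, hpq]
    simp only [derivative_mul, derivative_X, map_add, map_mul, aeval_X, map_one]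

theorem lie_units_zpow {p : A} {u : Aˣ} (hpu : ⁅p, (u : A)⁆ = 1) (n : ℤ) :
    ⁅p, ((u ^ n : Aˣ) : A)⁆ = n • ((u ^ (n - 1) : Aˣ) : A) := by
  have zpow_mul_self (k : ℤ) : ((u ^ (k - 1) : Aˣ) : A) * u = (u ^ k : Aˣ) := by
    rw [← Units.val_mul, ← zpow_add_one, sub_add_cancel]
  have lie_step (k : ℤ) :
      ⁅p, ((u ^ k : Aˣ) : A)⁆ = ⁅p, ((u ^ (k - 1) : Aˣ) : A)⁆ * u + (u ^ (k - 1) : Aˣ) := by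
    rw [← zpow_mul_self k, ring_lie_mul, hpu, mul_one]
  induction n using Int.induction_on with
  | zero => simp [Ring.lie_def]
  | succ n ih =>
    rw [lie_step, add_sub_cancel_right, ih, smul_mul_assoc, zpow_mul_self, add_smul, one_smul]
  | pred n ih =>
    rw [lie_step] at ih
    rw [← u.isUnit.mul_left_inj, eq_sub_of_add_eq ih, smul_mul_assoc, zpow_mul_self, sub_smul,
      one_smul]

end Commutator

section Eigenspaces

theorem surjective_of_injective_of_iSup_eigenspace_eq_top {K M : Type*} [Field K] [AddCommGroup M]
    [Module K M] {T : End K M} (hT : Function.Injective T) (htop : ⨆ μ, T.eigenspace μ = ⊤) :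
    Function.Surjective T := by
  rw [← LinearMap.range_eq_top, eq_top_iff, ← htop]
  refine iSup_le fun μ w hw ↦ ?_
  rw [End.mem_eigenspace_iff] at hw
  rcases eq_or_ne μ 0 with rfl | hμ
  · rw [zero_smul, map_eq_zero_iff T hT] at hw
    exact hw ▸ zero_mem _
  · exact ⟨μ⁻¹ • w, by rw [map_smul, hw, inv_smul_smul₀ hμ]⟩

theorem exists_hasEigenvalue_of_iSup_eigenspace_eq_top {R M : Type*} [CommRing R] [AddCommGroup M]
    [Module R M] [Nontrivial M] {T : End R M} (htop : ⨆ μ, T.eigenspace μ = ⊤) :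
    ∃ μ, T.HasEigenvalue μ := by
  by_contra! hbot
  have heig (μ : R) : T.eigenspace μ = ⊥ := not_not.mp (hbot μ)
  simp only [heig, iSup_bot, bot_ne_top] at htop

theorem iSup_eigenspace_mem_invtSubmodule {R M : Type*} [CommRing R] [AddCommGroup M] [Module R M]
    {T S : End R M} {σ : R → R}
    (hS : ∀ ⦃μ : R⦄ ⦃v : M⦄, v ∈ T.eigenspace μ → S v ∈ T.eigenspace (σ μ)) :
    ⨆ μ, T.eigenspace μ ∈ S.invtSubmodule :=
  S.mem_invtSubmodule.mpr <| iSup_le fun μ _ hv ↦ Submodule.mem_iSup_of_mem (σ μ) (hS hv)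

variable {R M : Type*} [CommRing R] [AddCommGroup M] [Module R M] {P Q : End R M} {μ : R} {v : M}

theorem apply_apply_eq_add_of_lie_eq_one (hPQ : ⁅P, Q⁆ = 1) (v : M) : P (Q v) = Q (P v) + v := by
  have h := LinearMap.congr_fun hPQ v
  rwa [Ring.lie_def, LinearMap.sub_apply, sub_eq_iff_eq_add'] at h

theorem map_mem_eigenspace_sub_one (hPQ : ⁅P, Q⁆ = 1) (hv : v ∈ (Q * P).eigenspace μ) :
    P v ∈ (Q * P).eigenspace (μ - 1) := by
  rw [End.mem_eigenspace_iff, End.mul_apply] at hv ⊢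
  rw [sub_smul, one_smul, ← map_smul, ← hv, apply_apply_eq_add_of_lie_eq_one hPQ,
    add_sub_cancel_right]

theorem map_mem_eigenspace_add_one (hPQ : ⁅P, Q⁆ = 1) (hv : v ∈ (Q * P).eigenspace μ) :
    Q v ∈ (Q * P).eigenspace (μ + 1) := by
  rw [End.mem_eigenspace_iff, End.mul_apply] at hv ⊢
  rw [apply_apply_eq_add_of_lie_eq_one hPQ, map_add, hv, map_smul, add_smul, one_smul]

theorem apply_units_zpow_smul_of_mem_eigenspace {u : (End R M)ˣ} (hPu : ⁅P, (u : End R M)⁆ = 1)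
    (hv : v ∈ (u * P).eigenspace μ) (n : ℤ) :
    P (u ^ n • v) = (n + μ) • u ^ (n - 1) • v := by
  have hPv : P v = u⁻¹ • μ • v := eq_inv_smul_iff.mpr (End.mem_eigenspace_iff.mp hv)
  have hlie : P (u ^ n • v) - u ^ n • P v = n • u ^ (n - 1) • v :=
    LinearMap.congr_fun (lie_units_zpow hPu n) v
  rw [sub_eq_iff_eq_add.mp hlie, hPv, smul_smul, ← zpow_sub_one, smul_comm (u ^ (n - 1)) μ,
    add_smul, Int.cast_smul_eq_zsmul]

theorem units_zpow_smul_mem_eigenspace {u : (End R M)ˣ} (hPu : ⁅P, (u : End R M)⁆ = 1)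
    (hv : v ∈ (u * P).eigenspace μ) (n : ℤ) : u ^ n • v ∈ (u * P).eigenspace (n + μ) := by
  have hstep : u • u ^ (n - 1) • v = u ^ n • v := by
    rw [smul_smul, ← zpow_one_add, add_sub_cancel]
  rw [End.mem_eigenspace_iff, End.mul_apply, apply_units_zpow_smul_of_mem_eigenspace hPu hv,
    map_smul, ← hstep]
  rfl

end Eigenspaces

section Polynomial

/-- The map `f ↦ f(Q) v`, which embeds the polynomial module into a Weyl module once `v` is a
nonzero vector killed by `P`. -/
noncomputable def aevalApply {R M : Type*} [CommSemiring R] [AddCommMonoid M] [Module R M]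
    (Q : End R M) (v : M) : R[X] →ₗ[R] M :=
  LinearMap.applyₗ v ∘ₗ (aeval Q).toLinearMap

theorem aevalApply_X_mul {R M : Type*} [CommSemiring R] [AddCommMonoid M] [Module R M]
    (Q : End R M) (v : M) (f : R[X]) : aevalApply Q v (X * f) = Q (aevalApply Q v f) := by
  simp [aevalApply]

theorem aevalApply_derivative {R M : Type*} [CommRing R] [AddCommGroup M] [Module R M]
    {P Q : End R M} (hPQ : ⁅P, Q⁆ = 1) {v : M} (hPv : P v = 0) (f : R[X]) :
    aevalApply Q v (derivative f) = P (aevalApply Q v f) := by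
  have hlie : P (aeval Q f v) - aeval Q f (P v) = aeval Q (derivative f) v :=
    LinearMap.congr_fun (lie_aeval_eq_aeval_derivative hPQ f) v
  rw [hPv, map_zero, sub_zero] at hlie
  exact hlie.symm

theorem one_mem_of_mem_invtSubmodule_derivative {K : Type*} [Field K] [CharZero K]
    {U : Submodule K K[X]} (hU : U ∈ End.invtSubmodule derivative) {f : K[X]} (hf : f ∈ U)
    (hf0 : f ≠ 0) : 1 ∈ U := by
  induction hn : f.natDegree generalizing f with
  | zero =>
    obtain ⟨a, rfl⟩ := natDegree_eq_zero.mp hn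
    have ha : a ≠ 0 := fun h ↦ hf0 (by rw [h, C_0])
    have hone : (1 : K[X]) = a⁻¹ • C a := by rw [smul_C, smul_eq_mul, inv_mul_cancel₀ ha, C_1]
    exact hone ▸ U.smul_mem _ hf
  | succ n ih =>
    have hf' : derivative f ≠ 0 := derivative_ne_zero.mpr (by lia)
    exact ih (hU hf) hf' (by rw [natDegree_derivative, hn, Nat.add_sub_cancel])

theorem aevalApply_injective {K M : Type*} [Field K] [CharZero K] [AddCommGroup M] [Module K M]
    {P Q : End K M} (hPQ : ⁅P, Q⁆ = 1) {v : M} (hv : v ≠ 0) (hPv : P v = 0) :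
    Function.Injective (aevalApply Q v) := by
  have hker : LinearMap.ker (aevalApply Q v) ∈ End.invtSubmodule derivative := fun f hf ↦ by
    rw [Submodule.mem_comap, LinearMap.mem_ker, aevalApply_derivative hPQ hPv,
      LinearMap.mem_ker.mp hf, map_zero]
  have hone : aevalApply Q v 1 = v := by simp [aevalApply]
  refine (injective_iff_map_eq_zero _).mpr fun f hf ↦ by_contra fun hf0 ↦ hv ?_
  rw [← hone]
  exact one_mem_of_mem_invtSubmodule_derivative hker hf hf0

end Polynomial

/-- Two operators act irreducibly if they have no common invariant subspaces besides `⊥` and `⊤`.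
When `⁅P, Q⁆ = 1` this says that `M` is a simple module over the Weyl algebra, except that `M = 0`
is not excluded. -/
def ActsIrreducibly {R M : Type*} [Semiring R] [AddCommMonoid M] [Module R M] (P Q : End R M) :
    Prop :=
  ∀ ⦃U : Submodule R M⦄, U ∈ P.invtSubmodule → U ∈ Q.invtSubmodule → U = ⊥ ∨ U = ⊤

namespace ActsIrreducibly

section Ring

variable {R M : Type*} [CommRing R] [AddCommGroup M] [Module R M] {P Q : End R M}

theorem neg_swap (hirr : ActsIrreducibly P Q) : ActsIrreducibly (-Q) P := fun U hUQ hUP ↦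
  hirr hUP fun _ hm ↦ U.neg_mem_iff.mp (hUQ hm)

theorem exists_equiv_of_injective {V : Type*} [AddCommGroup V] [Module R V] [Nontrivial V]
    (hirr : ActsIrreducibly P Q) {A B : End R V} {φ : V →ₗ[R] M} (hφ : Function.Injective φ)
    (hA : ∀ x, φ (A x) = P (φ x)) (hB : ∀ x, φ (B x) = Q (φ x)) :
    ∃ e : M ≃ₗ[R] V, (∀ m, e (P m) = A (e m)) ∧ ∀ m, e (Q m) = B (e m) := by
  have hrange : LinearMap.range φ = ⊤ := by
    refine (hirr ?_ ?_).resolve_left ?_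
    · rintro _ ⟨x, rfl⟩
      exact ⟨A x, hA x⟩
    · rintro _ ⟨x, rfl⟩
      exact ⟨B x, hB x⟩
    · rw [LinearMap.range_eq_bot]
      rintro rfl
      exact not_subsingleton V ⟨fun x y ↦ hφ rfl⟩
  let e := LinearEquiv.ofBijective φ ⟨hφ, LinearMap.range_eq_top.mp hrange⟩
  have map_symm (m : M) : φ (e.symm m) = m := e.apply_symm_apply m
  exact ⟨e.symm, fun m ↦ hφ (by rw [hA, map_symm, map_symm]),
    fun m ↦ hφ (by rw [hB, map_symm, map_symm])⟩

theorem span_range_eq_top {ι : Type*} (hirr : ActsIrreducibly P Q) {b : ι → M}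
    (hb : ∃ i, b i ≠ 0) (hPb : ∀ i, P (b i) ∈ Submodule.span R (Set.range b))
    (hQb : ∀ i, Q (b i) ∈ Submodule.span R (Set.range b)) :
    Submodule.span R (Set.range b) = ⊤ := by
  refine (hirr ?_ ?_).resolve_left ?_
  · exact P.mem_invtSubmodule.mpr (Submodule.span_le.mpr (Set.range_subset_iff.mpr hPb))
  · exact Q.mem_invtSubmodule.mpr (Submodule.span_le.mpr (Set.range_subset_iff.mpr hQb))
  · obtain ⟨i, hi⟩ := hb
    exact fun hbot ↦ hi (Submodule.span_eq_bot.mp hbot _ (Set.mem_range_self i))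

theorem iSup_eigenspace_eq_top (hirr : ActsIrreducibly P Q) (hPQ : ⁅P, Q⁆ = 1) {μ : R}
    (hμ : (Q * P).HasEigenvalue μ) : ⨆ ν, (Q * P).eigenspace ν = ⊤ := by
  refine (hirr (iSup_eigenspace_mem_invtSubmodule fun _ _ ↦ map_mem_eigenspace_sub_one hPQ)
    (iSup_eigenspace_mem_invtSubmodule fun _ _ ↦ map_mem_eigenspace_add_one hPQ)).resolve_left ?_
  exact fun hbot ↦ hμ (iSup_eq_bot.mp hbot μ)

end Ring

section Field

variable {K M : Type*} [Field K] [AddCommGroup M] [Module K M] {P Q : End K M}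

theorem isUnit_right_of_injective (hirr : ActsIrreducibly P Q) (hPQ : ⁅P, Q⁆ = 1) {μ : K}
    (hμ : (Q * P).HasEigenvalue μ) (hP : Function.Injective P) (hQ : Function.Injective Q) :
    IsUnit Q := by
  have hQP : Function.Surjective (Q * P) :=
    surjective_of_injective_of_iSup_eigenspace_eq_top (hQ.comp hP)
      (hirr.iSup_eigenspace_eq_top hPQ hμ)
  exact (End.isUnit_iff Q).mpr ⟨hQ, .of_comp (g := P) hQP⟩

variable [CharZero K]

theorem exists_equiv_polynomial (hirr : ActsIrreducibly P Q) (hPQ : ⁅P, Q⁆ = 1)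
    (hP : ¬ Function.Injective P) :
    ∃ e : M ≃ₗ[K] K[X], (∀ m, e (P m) = derivative (e m)) ∧ ∀ m, e (Q m) = X * e m := by
  obtain ⟨v, hPv, hv⟩ : ∃ v, P v = 0 ∧ v ≠ 0 := by
    simpa [injective_iff_map_eq_zero] using hP
  exact hirr.exists_equiv_of_injective (B := LinearMap.mulLeft K X)
    (aevalApply_injective hPQ hv hPv) (aevalApply_derivative hPQ hPv) (aevalApply_X_mul Q v)

theorem exists_basis_int (hirr : ActsIrreducibly P Q) (hPQ : ⁅P, Q⁆ = 1) {μ : K}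
    (hμ : (Q * P).HasEigenvalue μ) (hP : Function.Injective P) (hQ : Function.Injective Q) :
    (∀ k : ℤ, μ ≠ k) ∧ ∃ b : Basis ℤ K M,
      (∀ n, Q (b n) = b (n + 1)) ∧ ∀ n, P (b n) = (n + μ) • b (n - 1) := by
  obtain ⟨u, rfl⟩ := hirr.isUnit_right_of_injective hPQ hμ hP hQ
  obtain ⟨v, hv, hv0⟩ := hμ.exists_hasEigenvector
  let b (n : ℤ) : M := u ^ n • v
  have hb0 (n : ℤ) : b n ≠ 0 := (smul_ne_zero_iff_ne _).mpr hv0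
  have hQb (n : ℤ) : (u : End K M) (b n) = b (n + 1) := by
    rw [add_comm]
    exact (smul_smul u (u ^ n) v).trans (by rw [← zpow_one_add])
  have hPb (n : ℤ) : P (b n) = (n + μ) • b (n - 1) :=
    apply_units_zpow_smul_of_mem_eigenspace hPQ hv n
  have hindep : LinearIndependent K b :=
    End.eigenvectors_linearIndependent' ((u : End K M) * P) (fun n : ℤ ↦ n + μ)
      ((add_left_injective μ).comp Int.cast_injective) b
      fun n ↦ ⟨units_zpow_smul_mem_eigenspace hPQ hv n, hb0 n⟩
  have hb_mem (n : ℤ) : b n ∈ Submodule.span K (Set.range b) :=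
    Submodule.subset_span (Set.mem_range_self n)
  have hspan : Submodule.span K (Set.range b) = ⊤ :=
    hirr.span_range_eq_top ⟨0, hb0 0⟩ (fun n ↦ hPb n ▸ Submodule.smul_mem _ _ (hb_mem (n - 1)))
      fun n ↦ hQb n ▸ hb_mem (n + 1)
  refine ⟨?_, .mk hindep hspan.ge, by simpa using hQb, by simpa using hPb⟩
  rintro k rfl
  exact hb0 (-k) (hP (by simp [hPb]))

end Field

end ActsIrreducibly

theorem weyl_simple_weight_module_classification_general {K M : Type*} [Field K] [CharZero K]
    [AddCommGroup M] [Module K M] {P Q : End K M} (hPQ : ⁅P, Q⁆ = 1) (hirr : ActsIrreducibly P Q)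
    {μ : K} (hμ : (Q * P).HasEigenvalue μ) :
    (∃ e : M ≃ₗ[K] K[X], (∀ m, e (P m) = derivative (e m)) ∧ ∀ m, e (Q m) = X * e m) ∨
    (∃ e : M ≃ₗ[K] K[X], (∀ m, e (P m) = X * e m) ∧ ∀ m, e (Q m) = -derivative (e m)) ∨
    ∃ lam : K, (∀ k : ℤ, lam ≠ k) ∧ ∃ b : Basis ℤ K M,
      (∀ n, Q (b n) = b (n + 1)) ∧ ∀ n, P (b n) = (n + lam) • b (n - 1) := by
  by_cases hP : Function.Injective P
  · by_cases hQ : Function.Injective Q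
    · exact .inr (.inr ⟨μ, hirr.exists_basis_int hPQ hμ hP hQ⟩)
    · have hneg : ⁅-Q, P⁆ = 1 := by
        rw [← hPQ, Ring.lie_def, Ring.lie_def]
        noncomm_ring
      obtain ⟨e, he, heP⟩ := hirr.neg_swap.exists_equiv_polynomial hneg
        (mt (neg_injective.of_comp_iff Q).mp hQ)
      exact .inr (.inl ⟨e, heP, fun m ↦ by rw [← he]; simp⟩)
  · exact .inl (hirr.exists_equiv_polynomial hPQ hP)

section LaurentModule

variable {M : Type*} [AddCommGroup M] [Module ℂ M] (b : Basis ℤ ℂ M)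

theorem repr_apply_eq_weylQ {Q : End ℂ M} (hQ : ∀ n, Q (b n) = b (n + 1)) (m : M) :
    b.repr (Q m) = weylQ (b.repr m) := by
  have hcomp : b.repr.toLinearMap ∘ₗ Q = weylQ ∘ₗ b.repr.toLinearMap :=
    b.ext fun n ↦ by simp [weylQ, hQ]
  exact LinearMap.congr_fun hcomp m

theorem repr_apply_eq_weylP {P : End ℂ M} {lam : ℂ}
    (hP : ∀ n, P (b n) = (n + lam) • b (n - 1)) (m : M) :
    b.repr (P m) = weylP lam (b.repr m) := by
  have hcomp : b.repr.toLinearMap ∘ₗ P = weylP lam ∘ₗ b.repr.toLinearMap :=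
    b.ext fun n ↦ by simp [weylP, hP]
  exact LinearMap.congr_fun hcomp m

end LaurentModule

/-- Block's classification of the simple weight modules over the rank 1 Weyl algebra.
A module over the Weyl algebra `W = ℂ⟨p,q⟩/(pq − qp − 1)` is a complex vector space `M`
together with operators `P, Q` satisfying `P∘Q − Q∘P = id`.  If such a module is simple
and the operator induced by `N = qp` acts semisimply (i.e. `M` is spanned by the
eigenvectors of `Q∘P`), then `M` is isomorphic, as a Weyl module, to one of:
(i) `ℂ[x]` with `p = d/dx`, `q = x`; (ii) `ℂ[x]` with `p = x`, `q = −d/dx`;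
(iii) `ℂ[x,x⁻¹]x^λ` for some `λ ∈ ℂ ∖ ℤ`, with basis `(e_n)_{n∈ℤ}`,
`q·e_n = e_{n+1}` and `p·e_n = (n+λ)·e_{n−1}`. -/
theorem weyl_simple_weight_module_classification
    {M : Type} [AddCommGroup M] [Module ℂ M] [Nontrivial M]
    (P Q : M →ₗ[ℂ] M) (hPQ : P ∘ₗ Q - Q ∘ₗ P = LinearMap.id)
    (hsimple : ∀ U : Submodule ℂ M,
      (∀ m ∈ U, P m ∈ U) → (∀ m ∈ U, Q m ∈ U) → U = ⊥ ∨ U = ⊤)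
    (hsemisimple : ⨆ μ : ℂ, Module.End.eigenspace (Q ∘ₗ P) μ = ⊤) :
    (∃ e : M ≃ₗ[ℂ] Polynomial ℂ,
      (∀ m, e (P m) = Polynomial.derivative (e m)) ∧
      (∀ m, e (Q m) = Polynomial.X * e m)) ∨
    (∃ e : M ≃ₗ[ℂ] Polynomial ℂ,
      (∀ m, e (P m) = Polynomial.X * e m) ∧
      (∀ m, e (Q m) = - Polynomial.derivative (e m))) ∨
    (∃ lam : ℂ, (∀ k : ℤ, lam ≠ (k : ℂ)) ∧
      ∃ e : M ≃ₗ[ℂ] (ℤ →₀ ℂ),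
        (∀ m, e (Q m) = weylQ (e m)) ∧
        (∀ m, e (P m) = weylP lam (e m))) := by
  obtain ⟨μ, hμ⟩ := exists_hasEigenvalue_of_iSup_eigenspace_eq_top hsemisimple
  exact (weyl_simple_weight_module_classification_general hPQ hsimple hμ).imp_right <|
    .imp_right fun ⟨lam, hlam, b, hQb, hPb⟩ ↦
      ⟨lam, hlam, b.repr, repr_apply_eq_weylQ b hQb, repr_apply_eq_weylP b hPb⟩
end

section
/- For every real j with 0 < j < 1, the series Σ_{n=0}^{∞} [((−j)_n (1+j)_n)/(n!)²]·(1/2)ⁿ converges absolutely and its sum equals √π / (Γ((1−j)/2)·Γ(1 + j/2)). (This is the evaluation of ₂F₁(−j, 1+j; 1; 1/2) by Gauss's second summation theorem.) -/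
open Real

/-!
For `a + b = 1` and `x = 1 / 2` the middle coefficient in Gauss's contiguous relation between
`₂F₁ a b c x`, `₂F₁ a b (c + 1) x` and `₂F₁ a b (c + 2) x` vanishes, so `₂F₁ a (1 - a) c (1 / 2)` is
an explicit rational multiple of `₂F₁ a (1 - a) (c + 2) (1 / 2)`. Iterating, and using that
`₂F₁ a b c x → 1` as `re c → ∞`, expresses `₂F₁ a (1 - a) c (1 / 2)` as an infinite product, which
Euler's limit formula evaluates in terms of `Γ` (Bailey's theorem). The case `a = -j`, `c = 1` is
the claim.
-/

open Filter Topology Finset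

lemma add_natCast_ne_neg_natCast {R : Type*} [CommRing R] {c : R} (hc : ∀ m : ℕ, c ≠ -m)
    (k m : ℕ) : c + k ≠ -m := by
  intro h
  refine hc (k + m) ?_
  push_cast
  linear_combination h

section Pochhammer

lemma ofReal_ascPochhammer_eval (x : ℝ) (n : ℕ) :
    (((ascPochhammer ℝ n).eval x : ℝ) : ℂ) = (ascPochhammer ℂ n).eval (x : ℂ) := by
  rw [← ascPochhammer_map Complex.ofRealHom]
  exact (Polynomial.eval_map_apply Complex.ofRealHom x).symm

lemma mul_ascPochhammer_eval_add_one {R : Type*} [CommSemiring R] (c : R) (n : ℕ) :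
    c * (ascPochhammer R n).eval (c + 1) = (ascPochhammer R n).eval c * (c + n) := by
  rw [← ascPochhammer_succ_eval, ascPochhammer_succ_left]
  simp

lemma ascPochhammer_eval_ne_zero {R : Type*} [CommRing R] [IsDomain R] {c : R}
    (hc : ∀ m : ℕ, c ≠ -m) (n : ℕ) : (ascPochhammer R n).eval c ≠ 0 := by
  rw [Ne, ascPochhammer_eval_eq_zero_iff]
  rintro ⟨m, -, hm⟩
  exact hc m (by rw [hm, neg_neg])

lemma factorial_le_norm_ascPochhammer_eval {𝕜 : Type*} [RCLike 𝕜] {c : 𝕜} (hc : 1 ≤ RCLike.re c)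
    (n : ℕ) : (n.factorial : ℝ) ≤ ‖(ascPochhammer 𝕜 n).eval c‖ := by
  induction n with
  | zero => simp
  | succ n ih =>
    have hn : (n + 1 : ℝ) ≤ ‖c + n‖ := calc
      (n + 1 : ℝ) ≤ RCLike.re (c + n) := by simpa [add_comm] using hc
      _ ≤ ‖c + n‖ := RCLike.re_le_norm _
    rw [ascPochhammer_succ_eval, norm_mul, Nat.factorial_succ, mul_comm (n + 1)]
    push_cast
    gcongr

end Pochhammer

section OrdinaryHypergeometric

local notation "coeff₂F₁" => ordinaryHypergeometricCoefficient

section Coefficient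

variable {K : Type*} [Field K] (a b : K) {c : K}

lemma ordinaryHypergeometricCoefficient_one_right (n : ℕ) :
    coeff₂F₁ a b 1 n =
      (ascPochhammer K n).eval a * (ascPochhammer K n).eval b / (n.factorial : K) ^ 2 := by
  rw [ordinaryHypergeometricCoefficient, ascPochhammer_eval_one]
  ring

lemma ordinaryHypergeometricCoefficient_succ (c : K) (n : ℕ) :
    coeff₂F₁ a b c (n + 1) =
      coeff₂F₁ a b c n * ((a + n) * (b + n) / ((c + n) * (n + 1))) := by
  simp only [ordinaryHypergeometricCoefficient, ascPochhammer_succ_eval, Nat.factorial_succ]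
  push_cast
  field

lemma ordinaryHypergeometricCoefficient_add_one_right (hc : ∀ m : ℕ, c ≠ -m) (n : ℕ) :
    coeff₂F₁ a b (c + 1) n = coeff₂F₁ a b c n * (c / (c + n)) := by
  have hc₀ : c ≠ 0 := by simpa using hc 0
  have hcn : c + n ≠ 0 := by simpa using add_natCast_ne_neg_natCast hc n 0
  have hpoch := ascPochhammer_eval_ne_zero hc n
  have hshift : (ascPochhammer K n).eval (c + 1) = (ascPochhammer K n).eval c * (c + n) / c := by
    rw [← mul_ascPochhammer_eval_add_one, mul_div_cancel_left₀ _ hc₀]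
  rw [ordinaryHypergeometricCoefficient, hshift]
  field

lemma ordinaryHypergeometricCoefficient_contiguous [CharZero K] (hc : ∀ m : ℕ, c ≠ -m)
    (x : K) (n : ℕ) :
    c * (c + 1) * (x - 1) * (coeff₂F₁ a b c n * x ^ n)
        + (c + 1) * (c - (2 * c + 1 - a - b) * x) * (coeff₂F₁ a b (c + 1) n * x ^ n)
        + (c + 1 - a) * (c + 1 - b) * x * (coeff₂F₁ a b (c + 1 + 1) n * x ^ n) =
      c * (c + 1) * ((n + 1 : ℕ) / ((n + 1 : ℕ) + c) * (coeff₂F₁ a b c (n + 1) * x ^ (n + 1))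
        - n / (n + c) * (coeff₂F₁ a b c n * x ^ n)) := by
  have hc₁ : ∀ m : ℕ, c + 1 ≠ -m := by simpa using add_natCast_ne_neg_natCast hc 1
  have hcn : c + n ≠ 0 := by simpa using add_natCast_ne_neg_natCast hc n 0
  have hcn' : c + 1 + n ≠ 0 := by simpa using add_natCast_ne_neg_natCast hc₁ n 0
  have hn : (n + 1 : K) ≠ 0 := Nat.cast_add_one_ne_zero n
  rw [ordinaryHypergeometricCoefficient_add_one_right a b hc₁,
    ordinaryHypergeometricCoefficient_add_one_right a b hc, ordinaryHypergeometricCoefficient_succ]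
  generalize coeff₂F₁ a b c n = t
  push_cast
  rw [show (n + 1 + c : K) = c + 1 + n by ring, show (n + c : K) = c + n by ring]
  field_simp
  ring

end Coefficient

variable {𝕜 : Type*} [RCLike 𝕜] (a b : 𝕜) {x : 𝕜}

lemma one_le_radius_ordinaryHypergeometricSeries (c : 𝕜) :
    1 ≤ (ordinaryHypergeometricSeries 𝕜 a b c).radius := by
  by_cases! habc : ∀ k : ℕ, (k : 𝕜) ≠ -a ∧ (k : 𝕜) ≠ -b ∧ (k : 𝕜) ≠ -c
  · exact (ordinaryHypergeometricSeries_radius_eq_one 𝕜 a b c habc).ge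
  · obtain ⟨k, hk⟩ := habc
    have hk : a = -k ∨ b = -k ∨ c = -k := by grind [neg_eq_iff_eq_neg]
    rcases hk with rfl | rfl | rfl
    · simp [ordinaryHypergeometric_radius_top_of_neg_nat₁]
    · simp [ordinaryHypergeometric_radius_top_of_neg_nat₂]
    · simp [ordinaryHypergeometric_radius_top_of_neg_nat₃]

lemma summable_norm_ordinaryHypergeometric (c : 𝕜) (hx : ‖x‖ < 1) :
    Summable fun n ↦ ‖coeff₂F₁ a b c n * x ^ n‖ := by
  have hmem : x ∈ Metric.eball 0 (ordinaryHypergeometricSeries 𝕜 a b c).radius := by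
    refine Metric.eball_subset_eball (one_le_radius_ordinaryHypergeometricSeries a b c) ?_
    rw [mem_eball_zero_iff, ← ofReal_norm]
    exact ENNReal.ofReal_lt_one.mpr hx
  simpa only [ordinaryHypergeometricSeries_apply_eq, smul_eq_mul] using
    (ordinaryHypergeometricSeries 𝕜 a b c).summable_norm_apply hmem

lemma hasSum_ordinaryHypergeometric (c : 𝕜) (hx : ‖x‖ < 1) :
    HasSum (fun n ↦ coeff₂F₁ a b c n * x ^ n) (₂F₁ a b c x) := by
  simpa only [ordinaryHypergeometric_eq_tsum, smul_eq_mul] using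
    (summable_norm_ordinaryHypergeometric a b c hx).of_norm.hasSum

theorem ordinaryHypergeometric_contiguous {c : 𝕜} (hc : ∀ m : ℕ, c ≠ -m) (hx : ‖x‖ < 1) :
    c * (c + 1) * (x - 1) * ₂F₁ a b c x
        + (c + 1) * (c - (2 * c + 1 - a - b) * x) * ₂F₁ a b (c + 1) x
        + (c + 1 - a) * (c + 1 - b) * x * ₂F₁ a b (c + 1 + 1) x = 0 := by
  have hsum (c' : 𝕜) := hasSum_ordinaryHypergeometric a b c' hx
  let G : ℕ → 𝕜 := fun n ↦ n / (n + c) * (coeff₂F₁ a b c n * x ^ n)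
  have hG : Tendsto G atTop (𝓝 0) := by
    simpa using (tendsto_natCast_div_add_atTop c).mul (hsum c).summable.tendsto_atTop_zero
  have hG₀ : G 0 = 0 := by simp [G]
  have hlhs := ((((hsum c).mul_left (c * (c + 1) * (x - 1))).add
    ((hsum (c + 1)).mul_left ((c + 1) * (c - (2 * c + 1 - a - b) * x)))).add
    ((hsum (c + 1 + 1)).mul_left ((c + 1 - a) * (c + 1 - b) * x))).tendsto_sum_nat
  refine tendsto_nhds_unique hlhs ?_
  simp_rw [ordinaryHypergeometricCoefficient_contiguous a b hc, ← mul_sum]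
  change Tendsto (fun N ↦ c * (c + 1) * ∑ n ∈ range N, (G (n + 1) - G n)) atTop (𝓝 0)
  simp_rw [sum_range_sub, hG₀]
  simpa using hG.const_mul (c * (c + 1))

lemma tendsto_ordinaryHypergeometricCoefficient_nhds_zero {ι : Type*} {l : Filter ι} {c : ι → 𝕜}
    (hc : Tendsto (fun i ↦ ‖c i‖) l atTop) {n : ℕ} (hn : n ≠ 0) :
    Tendsto (fun i ↦ coeff₂F₁ a b (c i) n) l (𝓝 0) := by
  have hdeg : 0 < (ascPochhammer 𝕜 n).degree := by
    rw [← Polynomial.natDegree_pos_iff_degree_pos, ascPochhammer_natDegree]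
    exact Nat.pos_of_ne_zero hn
  have hpoch : Tendsto (fun i ↦ ((ascPochhammer 𝕜 n).eval (c i))⁻¹) l (𝓝 0) := by
    rw [tendsto_zero_iff_norm_tendsto_zero]
    simp_rw [norm_inv]
    exact ((ascPochhammer 𝕜 n).tendsto_norm_atTop hdeg hc).inv_tendsto_atTop
  simpa using hpoch.const_mul _

theorem tendsto_ordinaryHypergeometric_nhds_one {ι : Type*} {l : Filter ι} {c : ι → 𝕜}
    (hc : Tendsto (fun i ↦ RCLike.re (c i)) l atTop) (hx : ‖x‖ < 1) :
    Tendsto (fun i ↦ ₂F₁ a b (c i) x) l (𝓝 1) := by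
  have hnorm : Tendsto (fun i ↦ ‖c i‖) l atTop :=
    tendsto_atTop_mono (fun i ↦ RCLike.re_le_norm (c i)) hc
  have hterm (n : ℕ) : Tendsto (fun i ↦ coeff₂F₁ a b (c i) n * x ^ n) l
      (𝓝 (if n = 0 then 1 else 0)) := by
    rcases eq_or_ne n 0 with rfl | hn
    · simp [ordinaryHypergeometricCoefficient, tendsto_const_nhds]
    · simpa [hn] using
        (tendsto_ordinaryHypergeometricCoefficient_nhds_zero a b hnorm hn).mul_const (x ^ n)
  have hbound : ∀ᶠ i in l, ∀ n,
      ‖coeff₂F₁ a b (c i) n * x ^ n‖ ≤ ‖coeff₂F₁ a b 1 n * x ^ n‖ := by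
    filter_upwards [hc.eventually_ge_atTop 1] with i hi n
    have hfac := factorial_le_norm_ascPochhammer_eval hi n
    simp only [ordinaryHypergeometricCoefficient, ascPochhammer_eval_one, norm_mul, norm_inv,
      RCLike.norm_natCast]
    gcongr
  have htsum := tendsto_tsum_of_dominated_convergence
    (summable_norm_ordinaryHypergeometric a b 1 hx) hterm hbound
  simpa only [tsum_ite_eq, (hasSum_ordinaryHypergeometric a b _ hx).tsum_eq] using htsum

lemma ordinaryHypergeometric_one_half_add_two {c : 𝕜} (hc : ∀ m : ℕ, c ≠ -m) :
    ₂F₁ a (1 - a) c (1 / 2 : 𝕜) =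
      ((c + a) / 2) * ((c - a + 1) / 2) / ((c / 2) * ((c + 1) / 2)) *
        ₂F₁ a (1 - a) (c + 2) (1 / 2 : 𝕜) := by
  have hc₀ : c ≠ 0 := by simpa using hc 0
  have hc₁ : c + 1 ≠ 0 := by simpa using add_natCast_ne_neg_natCast hc 1 0
  have hcontig := ordinaryHypergeometric_contiguous a (1 - a) hc (x := 1 / 2) (by norm_num)
  rw [show c + 1 + 1 = c + 2 by ring] at hcontig
  field_simp
  linear_combination (-2) * hcontig

lemma ordinaryHypergeometric_one_half_eq_prod_mul {c : 𝕜} (hc : ∀ m : ℕ, c ≠ -m) (N : ℕ) :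
    ₂F₁ a (1 - a) c (1 / 2 : 𝕜) =
      (∏ k ∈ range N,
        ((c + a) / 2 + k) * ((c - a + 1) / 2 + k) / ((c / 2 + k) * ((c + 1) / 2 + k))) *
        ₂F₁ a (1 - a) (c + 2 * N) (1 / 2 : 𝕜) := by
  induction N with
  | zero => simp
  | succ N ih =>
    have hcN : ∀ m : ℕ, c + 2 * N ≠ -m := by simpa using add_natCast_ne_neg_natCast hc (2 * N)
    rw [ih, ordinaryHypergeometric_one_half_add_two a hcN, prod_range_succ, mul_assoc]
    push_cast
    ring_nf

end OrdinaryHypergeometric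

lemma ne_neg_natCast_of_re_pos {s : ℂ} (hs : 0 < s.re) (m : ℕ) : s ≠ -m := by
  rintro rfl
  exact hs.not_ge (by simp)

lemma tendsto_prod_div_Gamma {p q u v : ℂ} (hpq : p + q = u + v)
    (hu : ∀ m : ℕ, u ≠ -m) (hv : ∀ m : ℕ, v ≠ -m) :
    Tendsto (fun N : ℕ ↦ ∏ k ∈ range N, (u + k) * (v + k) / ((p + k) * (q + k))) atTop
      (𝓝 (Complex.Gamma p * Complex.Gamma q / (Complex.Gamma u * Complex.Gamma v))) := by
  rw [← tendsto_add_atTop_iff_nat 1]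
  have hlim := ((Complex.GammaSeq_tendsto_Gamma p).mul (Complex.GammaSeq_tendsto_Gamma q)).div
    ((Complex.GammaSeq_tendsto_Gamma u).mul (Complex.GammaSeq_tendsto_Gamma v))
    (mul_ne_zero (Complex.Gamma_ne_zero hu) (Complex.Gamma_ne_zero hv))
  refine hlim.congr' ?_
  filter_upwards [eventually_ne_atTop 0] with N hN
  have hN' : (N : ℂ) ≠ 0 := Nat.cast_ne_zero.mpr hN
  have hpow : (N : ℂ) ^ p * (N : ℂ) ^ q = (N : ℂ) ^ u * (N : ℂ) ^ v := by
    rw [← Complex.cpow_add _ _ hN', ← Complex.cpow_add _ _ hN', hpq]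
  have hcancel : (N : ℂ) ^ u * N.factorial * ((N : ℂ) ^ v * N.factorial) ≠ 0 := by
    simp [Complex.cpow_eq_zero_iff, hN', Nat.factorial_ne_zero]
  simp only [Complex.GammaSeq, Pi.div_apply, prod_div_distrib, prod_mul_distrib]
  rw [div_mul_div_comm, div_mul_div_comm, mul_mul_mul_comm, hpow, mul_mul_mul_comm,
    div_div_div_cancel_left' _ _ hcancel]

theorem ordinaryHypergeometric_one_sub_one_half_eq_Gamma {a c : ℂ} (hc : ∀ m : ℕ, c ≠ -m)
    (hu : ∀ m : ℕ, (c + a) / 2 ≠ -m) (hv : ∀ m : ℕ, (c - a + 1) / 2 ≠ -m) :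
    ₂F₁ a (1 - a) c (1 / 2 : ℂ) =
      Complex.Gamma (c / 2) * Complex.Gamma ((c + 1) / 2) /
        (Complex.Gamma ((c + a) / 2) * Complex.Gamma ((c - a + 1) / 2)) := by
  have hprod := tendsto_prod_div_Gamma (p := c / 2) (q := (c + 1) / 2) (by ring) hu hv
  have hre : Tendsto (fun N : ℕ ↦ RCLike.re (c + 2 * N)) atTop atTop := by
    simpa using tendsto_atTop_add_const_left _ c.re
      (tendsto_natCast_atTop_atTop.const_mul_atTop (two_pos (α := ℝ)))
  have hone := tendsto_ordinaryHypergeometric_nhds_one a (1 - a) hre (x := 1 / 2) (by norm_num)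
  have hlim := hprod.mul hone
  simp_rw [← ordinaryHypergeometric_one_half_eq_prod_mul a hc, mul_one] at hlim
  exact tendsto_nhds_unique tendsto_const_nhds hlim

theorem hypergeometric_neg_j_one_add_j_one_half_general (j : ℂ)
    (hu : ∀ m : ℕ, (1 - j) / 2 ≠ -m) (hv : ∀ m : ℕ, 1 + j / 2 ≠ -m) :
    Summable (fun n : ℕ =>
      ‖(ascPochhammer ℂ n).eval (-j) * (ascPochhammer ℂ n).eval (1 + j) /
        (n.factorial : ℂ) ^ 2 * (1 / 2) ^ n‖) ∧
    (∑' n : ℕ, (ascPochhammer ℂ n).eval (-j) * (ascPochhammer ℂ n).eval (1 + j) /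
        (n.factorial : ℂ) ^ 2 * (1 / 2) ^ n) =
      (√π : ℝ) / (Complex.Gamma ((1 - j) / 2) * Complex.Gamma (1 + j / 2)) := by
  have hhalf : ‖(1 / 2 : ℂ)‖ < 1 := by norm_num
  have hGamma : Complex.Gamma (1 / 2) = (√π : ℝ) := by
    rw [← Real.Gamma_one_half_eq, ← Complex.Gamma_ofReal]
    norm_num
  have hu' : (1 + -j) / 2 = (1 - j) / 2 := by ring
  have hv' : (1 - -j + 1) / 2 = 1 + j / 2 := by ring
  have hbailey := ordinaryHypergeometric_one_sub_one_half_eq_Gamma (a := -j) (c := 1)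
    (ne_neg_natCast_of_re_pos (by simp)) (hu' ▸ hu) (hv' ▸ hv)
  rw [hu', hv', one_add_one_eq_two,
    div_self two_ne_zero, Complex.Gamma_one, mul_one, hGamma, sub_neg_eq_add] at hbailey
  simp_rw [← ordinaryHypergeometricCoefficient_one_right]
  refine ⟨summable_norm_ordinaryHypergeometric _ _ 1 hhalf, ?_⟩
  rw [(hasSum_ordinaryHypergeometric _ _ 1 hhalf).tsum_eq, hbailey]

/-- Gauss's second summation theorem at these parameters: for `0 < j < 1`, the series
`₂F₁(−j, 1+j; 1; 1/2)` converges absolutely and equals `√π / (Γ((1−j)/2)·Γ(1 + j/2))`. -/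
theorem hypergeometric_neg_j_one_add_j_one_half (j : ℝ) (hj0 : 0 < j) (hj1 : j < 1) :
    Summable (fun n : ℕ =>
      |(ascPochhammer ℝ n).eval (-j) * (ascPochhammer ℝ n).eval (1 + j) /
        ((n.factorial : ℝ)) ^ 2 * (1 / 2) ^ n|) ∧
    (∑' n : ℕ, (ascPochhammer ℝ n).eval (-j) * (ascPochhammer ℝ n).eval (1 + j) /
        ((n.factorial : ℝ)) ^ 2 * (1 / 2) ^ n) =
      Real.sqrt π / (Real.Gamma ((1 - j) / 2) * Real.Gamma (1 + j / 2)) := by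
  rw [← Complex.ofReal_inj]
  simp only [← Real.norm_eq_abs, ← Complex.norm_real]
  push_cast [ofReal_ascPochhammer_eval, ← Complex.Gamma_ofReal]
  exact hypergeometric_neg_j_one_add_j_one_half_general j
    (ne_neg_natCast_of_re_pos (by simpa using hj1))
    (ne_neg_natCast_of_re_pos (by simpa using by positivity))
end

section
/- For every real j with 0 < j < 1, the integral ∫₀¹ x^{j−1}(1−x)^{−j}(1 − x/2)^{j−1} dx converges and equals π^{3/2} / ( sin(πj)·Γ(1 − j/2)·Γ((1+j)/2) ); in particular it is nonzero. -/
open Real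

/-!
With `t = 1 - x` one has `2 x (1 - x / 2) = 1 - t ^ 2`, so the integrand is `2 ^ (1 - j)` times
`t ^ (-j) * (1 - t ^ 2) ^ (j - 1)`, and `u = t ^ 2` turns the integral into `2 ^ (-j)` times the
Beta integral `B((1 - j) / 2, j)`. The duplication formula at `(1 - j) / 2` and the reflection
formula at `j` then bring its Gamma factors into the required form.
-/

open MeasureTheory ProbabilityTheory Set

section CompRpow

variable {E : Type*} [NormedAddCommGroup E] [NormedSpace ℝ E] {b p : ℝ}

lemma smul_indicator_Iic_comp_rpow (f : ℝ → E) (w : ℝ → ℝ) (hp : 0 < p) (hb : 0 ≤ b) :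
    EqOn (fun x ↦ w x • (Iic (b ^ p)).indicator f (x ^ p))
      ((Iic b).indicator fun x ↦ w x • f (x ^ p)) (Ioi 0) := by
  intro x hx
  have mem_iff : x ^ p ∈ Iic (b ^ p) ↔ x ∈ Iic b := rpow_le_rpow_iff (le_of_lt hx) hb hp
  by_cases hxb : x ∈ Iic b
  · simp only [indicator_of_mem hxb, indicator_of_mem (mem_iff.2 hxb)]
  · simp only [indicator_of_notMem hxb, indicator_of_notMem (mt mem_iff.1 hxb), smul_zero]

lemma intervalIntegrable_comp_rpow_iff (f : ℝ → E) (hp : 0 < p) (hb : 0 ≤ b) :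
    IntervalIntegrable (fun x ↦ x ^ (p - 1) • f (x ^ p)) volume 0 b ↔
      IntervalIntegrable f volume 0 (b ^ p) := by
  rw [intervalIntegrable_iff_integrableOn_Ioc_of_le hb,
    intervalIntegrable_iff_integrableOn_Ioc_of_le (rpow_nonneg hb p), ← Iic_inter_Ioi,
    ← Iic_inter_Ioi, ← integrableOn_indicator_iff measurableSet_Iic,
    ← integrableOn_indicator_iff measurableSet_Iic,
    ← integrableOn_Ioi_comp_rpow_iff' ((Iic (b ^ p)).indicator f) hp.ne']
  exact (integrableOn_congr_fun (smul_indicator_Iic_comp_rpow f _ hp hb) measurableSet_Ioi).symm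

lemma integral_comp_rpow (f : ℝ → E) (hp : 0 < p) (hb : 0 ≤ b) :
    ∫ x in 0..b, (p * x ^ (p - 1)) • f (x ^ p) = ∫ y in 0..b ^ p, f y := by
  rw [intervalIntegral.integral_of_le hb, intervalIntegral.integral_of_le (rpow_nonneg hb p),
    ← Ioi_inter_Iic, ← Ioi_inter_Iic, ← setIntegral_indicator measurableSet_Iic,
    ← setIntegral_indicator measurableSet_Iic,
    ← integral_comp_rpow_Ioi_of_pos (g := (Iic (b ^ p)).indicator f) hp]
  exact (setIntegral_congr_fun measurableSet_Ioi (smul_indicator_Iic_comp_rpow f _ hp hb)).symm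

end CompRpow

section BetaIntegrals

variable {a b p : ℝ}

lemma ofReal_rpow_mul_one_sub_rpow (a b : ℝ) {t : ℝ} (ht : t ∈ Icc (0 : ℝ) 1) :
    ((t ^ (a - 1) * (1 - t) ^ (b - 1) : ℝ) : ℂ) =
      (t : ℂ) ^ ((a : ℂ) - 1) * (1 - (t : ℂ)) ^ ((b : ℂ) - 1) := by
  rw [Complex.ofReal_mul, Complex.ofReal_cpow ht.1, Complex.ofReal_cpow (sub_nonneg.2 ht.2)]
  push_cast
  rfl

lemma intervalIntegrable_rpow_mul_one_sub_rpow (ha : 0 < a) (hb : 0 < b) :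
    IntervalIntegrable (fun t : ℝ ↦ t ^ (a - 1) * (1 - t) ^ (b - 1)) volume 0 1 := by
  have complex_convergent := Complex.betaIntegral_convergent (u := a) (v := b) (by simpa) (by simpa)
  rw [intervalIntegrable_iff_integrableOn_Icc_of_le zero_le_one] at complex_convergent ⊢
  refine IntegrableOn.congr_fun (Integrable.re complex_convergent) (fun t ht ↦ ?_) measurableSet_Icc
  simp only [← ofReal_rpow_mul_one_sub_rpow a b ht, RCLike.re_to_complex, Complex.ofReal_re]

lemma integral_rpow_mul_one_sub_rpow (ha : 0 < a) (hb : 0 < b) :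
    ∫ t in (0 : ℝ)..1, t ^ (a - 1) * (1 - t) ^ (b - 1) = beta a b := by
  rw [beta_eq_betaIntegralReal a b ha hb, Complex.betaIntegral,
    ← Complex.ofReal_re (∫ _ in _.._, _), ← intervalIntegral.integral_ofReal]
  congr 1
  refine intervalIntegral.integral_congr fun t ht ↦ ?_
  rw [uIcc_of_le zero_le_one] at ht
  exact ofReal_rpow_mul_one_sub_rpow a b ht

lemma rpow_mul_rpow_rpow_mul_one_sub_rpow_rpow (a b p : ℝ) {t : ℝ} (ht : 0 < t) :
    t ^ (p - 1) * ((t ^ p) ^ (a - 1) * (1 - t ^ p) ^ (b - 1)) =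
      t ^ (p * a - 1) * (1 - t ^ p) ^ (b - 1) := by
  rw [← mul_assoc, ← rpow_mul ht.le, ← rpow_add ht]
  ring_nf

lemma intervalIntegrable_rpow_mul_one_sub_rpow_rpow (hp : 0 < p) (ha : 0 < a) (hb : 0 < b) :
    IntervalIntegrable (fun t : ℝ ↦ t ^ (p * a - 1) * (1 - t ^ p) ^ (b - 1)) volume 0 1 := by
  have substituted := (intervalIntegrable_comp_rpow_iff
    (fun u : ℝ ↦ u ^ (a - 1) * (1 - u) ^ (b - 1)) hp zero_le_one).2 <| by
      simpa only [one_rpow] using intervalIntegrable_rpow_mul_one_sub_rpow ha hb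
  refine substituted.congr fun t ht ↦ ?_
  rw [uIoc_of_le zero_le_one] at ht
  exact rpow_mul_rpow_rpow_mul_one_sub_rpow_rpow a b p ht.1

lemma integral_rpow_mul_one_sub_rpow_rpow (hp : 0 < p) (ha : 0 < a) (hb : 0 < b) :
    ∫ t in (0 : ℝ)..1, t ^ (p * a - 1) * (1 - t ^ p) ^ (b - 1) = beta a b / p := by
  have substituted := integral_comp_rpow
    (fun u : ℝ ↦ u ^ (a - 1) * (1 - u) ^ (b - 1)) hp zero_le_one
  rw [one_rpow, integral_rpow_mul_one_sub_rpow ha hb] at substituted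
  rw [eq_div_iff hp.ne', mul_comm, ← intervalIntegral.integral_const_mul, ← substituted]
  refine intervalIntegral.integral_congr_uIoo fun t ht ↦ ?_
  rw [uIoo_of_le zero_le_one] at ht
  simp only [smul_eq_mul, mul_assoc p, rpow_mul_rpow_rpow_mul_one_sub_rpow_rpow a b p ht.1]

lemma one_sub_rpow_mul_rpow_mul_one_sub_half_rpow (b c : ℝ) {t : ℝ} (ht : t ∈ Icc (-1 : ℝ) 1) :
    (1 - t) ^ b * t ^ c * (1 - (1 - t) / 2) ^ b = 2 ^ (-b) * (t ^ c * (1 - t ^ (2 : ℝ)) ^ b) := by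
  have factorization : 1 - t ^ (2 : ℝ) = (1 - t) * (1 + t) := by rw [rpow_two]; ring
  have half_sum : 1 - (1 - t) / 2 = 2⁻¹ * (1 + t) := by ring
  have one_add_nonneg : 0 ≤ 1 + t := by linarith [ht.1]
  rw [factorization, half_sum, mul_rpow (sub_nonneg.2 ht.2) one_add_nonneg,
    mul_rpow (by norm_num) one_add_nonneg, inv_rpow zero_le_two, rpow_neg zero_le_two]
  ring

lemma intervalIntegrable_rpow_mul_one_sub_rpow_mul_one_sub_half_rpow (ha : 0 < a) (hb : 0 < b) :
    IntervalIntegrable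
      (fun x : ℝ ↦ x ^ (b - 1) * (1 - x) ^ (2 * a - 1) * (1 - x / 2) ^ (b - 1)) volume 0 1 := by
  rw [← IntervalIntegrable.comp_sub_left_iff 1, sub_zero, sub_self]
  refine .symm <| ((intervalIntegrable_rpow_mul_one_sub_rpow_rpow two_pos ha hb).const_mul
    (2 ^ (-(b - 1)))).congr fun t ht ↦ ?_
  rw [uIoc_of_le zero_le_one] at ht
  rw [sub_sub_cancel,
    one_sub_rpow_mul_rpow_mul_one_sub_half_rpow _ _ ⟨by linarith [ht.1], ht.2⟩]

lemma integral_rpow_mul_one_sub_rpow_mul_one_sub_half_rpow (ha : 0 < a) (hb : 0 < b) :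
    ∫ x in (0 : ℝ)..1, x ^ (b - 1) * (1 - x) ^ (2 * a - 1) * (1 - x / 2) ^ (b - 1) =
      2 ^ (-b) * beta a b := by
  calc ∫ x in (0 : ℝ)..1, x ^ (b - 1) * (1 - x) ^ (2 * a - 1) * (1 - x / 2) ^ (b - 1)
    _ = ∫ t in (0 : ℝ)..1, (1 - t) ^ (b - 1) * t ^ (2 * a - 1) * (1 - (1 - t) / 2) ^ (b - 1) := by
      simpa using (intervalIntegral.integral_comp_sub_left (a := 0) (b := 1)
        (fun x : ℝ ↦ x ^ (b - 1) * (1 - x) ^ (2 * a - 1) * (1 - x / 2) ^ (b - 1)) 1).symm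
    _ = ∫ t in (0 : ℝ)..1, 2 ^ (-(b - 1)) * (t ^ (2 * a - 1) * (1 - t ^ (2 : ℝ)) ^ (b - 1)) := by
      refine intervalIntegral.integral_congr fun t ht ↦ ?_
      rw [uIcc_of_le zero_le_one] at ht
      exact one_sub_rpow_mul_rpow_mul_one_sub_half_rpow _ _ ⟨by linarith [ht.1], ht.2⟩
    _ = 2 ^ (-b + 1) * (beta a b / 2) := by
      rw [intervalIntegral.integral_const_mul,
        integral_rpow_mul_one_sub_rpow_rpow two_pos ha hb, neg_sub, sub_eq_neg_add]
    _ = 2 ^ (-b) * beta a b := by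
      rw [rpow_add_one two_ne_zero]
      ring

end BetaIntegrals

lemma Gamma_half_one_sub_mul_Gamma_one_sub_half_mul_Gamma (s : ℝ) :
    Real.Gamma ((1 - s) / 2) * Real.Gamma (1 - s / 2) * Real.Gamma s =
      2 ^ s * (π ^ ((3 : ℝ) / 2) / Real.sin (π * s)) := by
  have duplication : Real.Gamma ((1 - s) / 2) * Real.Gamma (1 - s / 2) =
      Real.Gamma (1 - s) * 2 ^ s * √π := by
    convert Real.Gamma_mul_Gamma_add_half ((1 - s) / 2) using 3 <;> ring_nf
  have pi_rpow : π ^ ((3 : ℝ) / 2) = π * √π := by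
    rw [sqrt_eq_rpow, ← rpow_one_add' pi_pos.le (by norm_num)]
    norm_num
  rw [duplication, pi_rpow]
  linear_combination 2 ^ s * √π * Real.Gamma_mul_Gamma_one_sub s

lemma beta_half_one_sub_self {s : ℝ} (hs : s < 2) :
    beta ((1 - s) / 2) s = 2 ^ s * (π ^ ((3 : ℝ) / 2) /
      (Real.sin (π * s) * Real.Gamma (1 - s / 2) * Real.Gamma ((1 + s) / 2))) := by
  have Gamma_ne_zero : Real.Gamma (1 - s / 2) ≠ 0 := (Gamma_pos_of_pos (by linarith)).ne'
  have Gamma_product : Real.Gamma ((1 - s) / 2) * Real.Gamma s =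
      2 ^ s * (π ^ ((3 : ℝ) / 2) / Real.sin (π * s)) / Real.Gamma (1 - s / 2) := by
    rw [eq_div_iff Gamma_ne_zero, ← Gamma_half_one_sub_mul_Gamma_one_sub_half_mul_Gamma]
    ring
  rw [beta, Gamma_product, show (1 - s) / 2 + s = (1 + s) / 2 by ring]
  simp only [mul_div_assoc, div_div]

/-- For `0 < j < 1`,
`∫₀¹ x^{j−1}(1−x)^{−j}(1 − x/2)^{j−1} dx = π^{3/2} / (sin(πj)·Γ(1 − j/2)·Γ((1+j)/2))`,
the integral being convergent; in particular it is nonzero. -/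
theorem rigidity_integral_evaluation (j : ℝ) (hj0 : 0 < j) (hj1 : j < 1) :
    IntervalIntegrable
      (fun x : ℝ => x ^ (j - 1) * (1 - x) ^ (-j) * (1 - x / 2) ^ (j - 1))
      MeasureTheory.volume 0 1 ∧
    (∫ x in (0:ℝ)..1, x ^ (j - 1) * (1 - x) ^ (-j) * (1 - x / 2) ^ (j - 1)) =
      π ^ ((3 : ℝ) / 2) /
        (Real.sin (π * j) * Real.Gamma (1 - j / 2) * Real.Gamma ((1 + j) / 2)) ∧
    (∫ x in (0:ℝ)..1, x ^ (j - 1) * (1 - x) ^ (-j) * (1 - x / 2) ^ (j - 1)) ≠ 0 := by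
  have param_pos : 0 < (1 - j) / 2 := by linarith
  have integrable := intervalIntegrable_rpow_mul_one_sub_rpow_mul_one_sub_half_rpow param_pos hj0
  have value := integral_rpow_mul_one_sub_rpow_mul_one_sub_half_rpow param_pos hj0
  have exponent : 2 * ((1 - j) / 2) - 1 = -j := by ring
  rw [exponent] at integrable value
  refine ⟨integrable, ?_, ?_⟩
  · rw [value, beta_half_one_sub_self (by linarith), ← mul_assoc, ← rpow_add two_pos,
      neg_add_cancel, rpow_zero, one_mul]
  · rw [value]
    exact (mul_pos (rpow_pos_of_pos two_pos _) (beta_pos param_pos hj0)).ne'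
end
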